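/- arXiv:2407.04817 — 3 statements merged into one kernel-verified Lean document; each statement's English description precedes it below -/
import Mathlib

section
/- Let (G,≤) be a marked ribbon graph. Then the maps sending an anti-walk to its target vertex, respectively to its source vertex, are bijections from the set of anti-walks of (G,≤) onto the vertex set V(G). Moreover, the target half-edge of the unique anti-walk with target vertex α is the maximal half-edge at α, and the source half-edge of any anti-walk is the minimal half-edge at its source vertex. -/
set_option autoImplicit false

attribute [local instance] Classical.propDecidable

/-- A marked ribbon graph `(G, ≤)`: a finite graph given by half-edges (a set `H` of
half-edges with an incidence map `z : H → V` and a fixed-point-free involution `ι`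
whose orbits are the edges), together with a partial order `≤` on `H` in which two
half-edges are comparable exactly when they are incident to the same vertex; the graph
is required to be connected, without isolated vertices (`z` surjective) and with a
vertex of degree at least two. -/
structure MRG (V H : Type) where
  z : H → V
  invh : H → H
  inv_inv : ∀ h, invh (invh h) = h
  inv_ne : ∀ h, invh h ≠ h
  z_surj : Function.Surjective z
  le : H → H → Prop
  le_refl : ∀ h, le h h
  le_trans : ∀ {a b c}, le a b → le b c → le a c
  le_antisymm : ∀ {a b}, le a b → le b a → a = b
  comp_iff : ∀ a b, (le a b ∨ le b a) ↔ z a = z b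
  connected : ∀ u v : V,
    Relation.ReflTransGen (fun x y => ∃ h, z h = x ∧ z (invh h) = y) u v
  thick : ∃ h h' : H, h ≠ h' ∧ z h = z h'

namespace MRG

variable {V H : Type}

/-- The type of edges of the graph: orbits of the involution. -/
def E (G : MRG V H) : Type := Quot (fun a b : H => b = G.invh a)

/-- The edge containing a given half-edge. -/
def edge (G : MRG V H) (h : H) : G.E := Quot.mk _ h

/-- The strict order on half-edges. -/
def lt (G : MRG V H) (a b : H) : Prop := G.le a b ∧ a ≠ b

/-- `b` covers `a`: `a` is a direct predecessor of `b` (equivalently `b` is the direct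
successor of `a`) with respect to `≤`. -/
def Cov (G : MRG V H) (a b : H) : Prop :=
  G.lt a b ∧ ∀ c, G.lt a c → G.lt c b → False

end MRG

namespace MRG

variable {V H : Type}

/-- An ordered edge of the graph: a pair `(h′, h″)` of half-edges with `h″ = ι h′`;
the first component is the target half-edge, the second the source half-edge. -/
def OE (G : MRG V H) : Type := {p : H × H // p.2 = G.invh p.1}

/-- The target half-edge of an ordered edge. -/
def OE.tH {G : MRG V H} (i : OE G) : H := i.1.1

/-- The source half-edge of an ordered edge. -/
def OE.sH {G : MRG V H} (i : OE G) : H := i.1.2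

/-- The target vertex of an ordered edge. -/
def OE.tvx {G : MRG V H} (i : OE G) : V := G.z i.1.1

/-- The source vertex of an ordered edge. -/
def OE.svx {G : MRG V H} (i : OE G) : V := G.z i.1.2

/-- The inverse of an ordered edge. -/
def OE.inv {G : MRG V H} (i : OE G) : OE G :=
  ⟨(i.1.2, i.1.1), by rw [i.2, G.inv_inv]⟩

/-- `l` is (the list of ordered edges of) a walk of `G`, written from right to left. -/
def IsWalkL (G : MRG V H) (l : List (OE G)) : Prop :=
  l.Chain' (fun i j => OE.svx i = OE.tvx j)

/-- The walk `l` is reduced: no ordered edge is immediately followed by its inverse. -/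
def IsRedL (G : MRG V H) (l : List (OE G)) : Prop :=
  l.Chain' (fun i j => j ≠ OE.inv i)

/-- `b` is the direct successor of `a` with respect to `≤`. -/
def DSucc (G : MRG V H) (a b : H) : Prop := G.Cov a b

/-- Anti-walks of `(G, ≤)`: non-trivial walks `i₁⋯i_L i_{L+1}` in which, for
consecutive ordered edges, the source half-edge of `iₜ` is the direct successor of the
target half-edge of `iₜ₊₁` with respect to `≤`, maximal with this property. -/
def IsAntiWalkL (G : MRG V H) (l : List (OE G)) : Prop :=
  l ≠ [] ∧ G.IsWalkL l ∧
  l.Chain' (fun i j => G.DSucc (OE.tH j) (OE.sH i)) ∧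
  (∀ i, l.head? = some i → ∀ i0 : OE G, ¬ G.DSucc (OE.tH i) (OE.sH i0)) ∧
  (∀ i, l.getLast? = some i → ∀ i2 : OE G, ¬ G.DSucc (OE.tH i2) (OE.sH i))

end MRG

open MRG

section Helpers

theorem aux_exists {α : Type} [Finite α] (R : α → α → Prop)
    (hl : ∀ a b c, R a c → R b c → a = b) (a : α) (ha : ∀ x, ¬ R x a) :
    ∃ l : List α, l.head? = some a ∧ List.IsChain R l ∧
      ∀ i, l.getLast? = some i → ∀ j, ¬ R i j := by
  have irr : ∀ x, Relation.ReflTransGen R a x → ¬ Relation.TransGen R x x := by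
    intro x hx
    induction hx with
    | refl =>
      intro h
      obtain ⟨w, _, hw⟩ := Relation.TransGen.tail'_iff.1 h
      exact ha w hw
    | tail _ hxy ih =>
      intro h
      obtain ⟨w, hyw, hw⟩ := Relation.TransGen.tail'_iff.1 h
      have := hl _ _ _ hw hxy
      subst this
      exact ih (Relation.TransGen.head'_iff.2 ⟨_, hxy, hyw⟩)
  let T : α → α → Prop := fun x y => Relation.ReflTransGen R a y ∧ Relation.TransGen R y x
  haveI : IsTrans α T := ⟨fun x y z h1 h2 => ⟨h2.1, h2.2.trans h1.2⟩⟩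
  haveI : Std.Irrefl T := ⟨fun x h => irr x h.1 h.2⟩
  have wf : WellFounded T := Finite.wellFounded_of_trans_of_irrefl T
  have key : ∀ x, Relation.ReflTransGen R a x → ∃ l : List α, l.head? = some x ∧
      List.IsChain R l ∧ ∀ i, l.getLast? = some i → ∀ j, ¬ R i j := by
    intro x
    induction x using wf.induction with
    | _ x ih =>
      intro hx
      by_cases h : ∃ y, R x y
      · obtain ⟨y, hy⟩ := h
        obtain ⟨l, h1, h2, h3⟩ := ih y ⟨hx, .single hy⟩ (hx.tail hy)
        cases l with
        | nil => simp at h1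
        | cons b t =>
          simp at h1
          subst h1
          refine ⟨x :: b :: t, rfl, List.isChain_cons_cons.2 ⟨hy, h2⟩, ?_⟩
          intro i hi
          exact h3 i (by simpa [List.getLast?_cons_cons] using hi)
      · refine ⟨[x], rfl, List.isChain_singleton _, ?_⟩
        intro i hi j hj
        simp at hi
        subst hi
        exact h ⟨j, hj⟩
  exact key a .refl

theorem aux_unique {α : Type} (R : α → α → Prop)
    (hr : ∀ a b c, R a b → R a c → b = c) : ∀ (l l' : List α),
    l ≠ [] → l' ≠ [] → l.head? = l'.head? → List.IsChain R l → List.IsChain R l' →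
    (∀ i, l.getLast? = some i → ∀ j, ¬ R i j) →
    (∀ i, l'.getLast? = some i → ∀ j, ¬ R i j) → l = l' := by
  intro l
  induction l with
  | nil => intro l' h; exact absurd rfl h
  | cons a t ih =>
    intro l' _ hl' hh c c' e e'
    cases l' with
    | nil => exact absurd rfl hl'
    | cons b t' =>
      simp at hh
      subst hh
      cases t with
      | nil =>
        cases t' with
        | nil => rfl
        | cons y s => exact absurd (List.isChain_cons_cons.1 c').1 (e a rfl y)
      | cons x r =>
        cases t' with
        | nil => exact absurd (List.isChain_cons_cons.1 c).1 (e' a rfl x)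
        | cons y s =>
          have c1 := List.isChain_cons_cons.1 c
          have c2 := List.isChain_cons_cons.1 c'
          have hxy := hr _ _ _ c1.1 c2.1
          subst hxy
          rw [ih (x :: s) (by simp) (by simp) rfl c1.2 c2.2
            (fun i hi => e i (by simpa [List.getLast?_cons_cons] using hi))
            (fun i hi => e' i (by simpa [List.getLast?_cons_cons] using hi))]

variable {V H : Type}

/-- The partial order on half-edges. -/
@[reducible] def auxPO (G : MRG V H) : PartialOrder H where
  le := G.le
  le_refl := G.le_refl
  le_trans := fun _ _ _ => G.le_trans
  le_antisymm := fun _ _ => G.le_antisymm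

theorem aux_ltz (G : MRG V H) {a b : H} (h : G.lt a b) : G.z a = G.z b :=
  (G.comp_iff a b).1 (Or.inl h.1)

theorem aux_cov_left (G : MRG V H) {a b c : H} (h1 : G.Cov a c) (h2 : G.Cov b c) : a = b := by
  by_contra hne
  rcases (G.comp_iff a b).2 ((aux_ltz G h1.1).trans (aux_ltz G h2.1).symm) with h | h
  · exact h1.2 b ⟨h, hne⟩ h2.1
  · exact h2.2 a ⟨h, fun e => hne e.symm⟩ h1.1

theorem aux_cov_right (G : MRG V H) {a b c : H} (h1 : G.Cov a b) (h2 : G.Cov a c) : b = c := by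
  by_contra hne
  rcases (G.comp_iff b c).2 ((aux_ltz G h1.1).symm.trans (aux_ltz G h2.1)) with h | h
  · exact h2.2 b h1.1 ⟨h, hne⟩
  · exact h1.2 c h2.1 ⟨h, fun e => hne e.symm⟩

theorem aux_max [Finite H] (G : MRG V H) (t : H) (ht : ∀ s, ¬ G.Cov t s) (h : H)
    (hz : G.z h = G.z t) : G.le h t := by
  by_contra hn
  have hle : G.le t h := ((G.comp_iff h t).2 hz).resolve_left hn
  letI := auxPO G
  have hfin : {c : H | G.lt t c}.Finite := Set.toFinite _
  obtain ⟨m, hm⟩ := hfin.exists_minimal ⟨h, hle, fun e => hn (e ▸ G.le_refl _)⟩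
  refine ht m ⟨hm.1, fun c h1 h2 => ?_⟩
  exact h2.2 (G.le_antisymm h2.1 (hm.2 h1 h2.1))

theorem aux_min [Finite H] (G : MRG V H) (t : H) (ht : ∀ s, ¬ G.Cov s t) (h : H)
    (hz : G.z h = G.z t) : G.le t h := by
  by_contra hn
  have hle : G.le h t := ((G.comp_iff h t).2 hz).resolve_right hn
  letI := auxPO G
  have hfin : {c : H | G.lt c t}.Finite := Set.toFinite _
  obtain ⟨m, hm⟩ := hfin.exists_maximal ⟨h, hle, fun e => hn (e ▸ G.le_refl _)⟩
  refine ht m ⟨hm.1, fun c h1 h2 => ?_⟩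
  exact h1.2 (G.le_antisymm h1.1 (hm.2 h2 h1.1))

theorem aux_exists_max [Finite H] (G : MRG V H) (v : V) :
    ∃ t, G.z t = v ∧ ∀ s, ¬ G.Cov t s := by
  letI := auxPO G
  have hfin : {c : H | G.z c = v}.Finite := Set.toFinite _
  obtain ⟨m, hm⟩ := hfin.exists_maximal (G.z_surj v)
  refine ⟨m, hm.1, fun s hs => hs.1.2 ?_⟩
  exact G.le_antisymm hs.1.1 (hm.2 ((aux_ltz G hs.1).symm.trans hm.1) hs.1.1)

theorem aux_exists_min [Finite H] (G : MRG V H) (v : V) :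
    ∃ t, G.z t = v ∧ ∀ s, ¬ G.Cov s t := by
  letI := auxPO G
  have hfin : {c : H | G.z c = v}.Finite := Set.toFinite _
  obtain ⟨m, hm⟩ := hfin.exists_minimal (G.z_surj v)
  refine ⟨m, hm.1, fun s hs => hs.1.2 ?_⟩
  exact G.le_antisymm hs.1.1 (hm.2 ((aux_ltz G hs.1).trans hm.1) hs.1.1)

theorem aux_ext_t (G : MRG V H) {i j : OE G} (h : OE.tH i = OE.tH j) : i = j := by
  have h' : i.1.1 = j.1.1 := h
  exact Subtype.ext (Prod.ext h' (by rw [i.2, j.2, h']))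

theorem aux_ext_s (G : MRG V H) {i j : OE G} (h : OE.sH i = OE.sH j) : i = j := by
  have h' : i.1.2 = j.1.2 := h
  refine aux_ext_t G ?_
  rw [i.2, j.2] at h'
  have := congrArg G.invh h'
  rwa [G.inv_inv, G.inv_inv] at this

/-- The ordered edge with given target half-edge. -/
def auxOfT (G : MRG V H) (h : H) : OE G := ⟨(h, G.invh h), rfl⟩

/-- The ordered edge with given source half-edge. -/
def auxOfS (G : MRG V H) (h : H) : OE G := ⟨(G.invh h, h), (G.inv_inv h).symm⟩

/-- The relation between consecutive ordered edges of an anti-walk. -/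
def auxR (G : MRG V H) (i j : OE G) : Prop := G.DSucc (OE.tH j) (OE.sH i)

theorem auxR_right (G : MRG V H) (a b c : OE G) (h1 : auxR G a b) (h2 : auxR G a c) : b = c :=
  aux_ext_t G (aux_cov_left G h1 h2)

theorem auxR_left (G : MRG V H) (a b c : OE G) (h1 : auxR G a c) (h2 : auxR G b c) : a = b :=
  aux_ext_s G (aux_cov_right G h1 h2)

theorem aux_head_max [Finite H] (G : MRG V H) (i : OE G)
    (hi : ∀ i0 : OE G, ¬ G.DSucc (OE.tH i) (OE.sH i0)) (h : H) (hz : G.z h = OE.tvx i) :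
    G.le h (OE.tH i) :=
  aux_max G _ (fun s hs => hi (auxOfS G s) hs) h hz

theorem aux_last_min [Finite H] (G : MRG V H) (i : OE G)
    (hi : ∀ i2 : OE G, ¬ G.DSucc (OE.tH i2) (OE.sH i)) (h : H) (hz : G.z h = OE.svx i) :
    G.le (OE.sH i) h :=
  aux_min G _ (fun s hs => hi (auxOfT G s) hs) h hz

theorem aux_mk (G : MRG V H) (l : List (OE G)) (h0 : l ≠ [])
    (h1 : List.IsChain (auxR G) l)
    (h2 : ∀ i, l.head? = some i → ∀ i0 : OE G, ¬ auxR G i0 i)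
    (h3 : ∀ i, l.getLast? = some i → ∀ j : OE G, ¬ auxR G i j) : G.IsAntiWalkL l :=
  ⟨h0, List.IsChain.imp (fun _ _ h => (aux_ltz G h.1).symm) h1, h1, h2, h3⟩

end Helpers

/-- Let `(G, ≤)` be a marked ribbon graph.  Then the maps sending an
anti-walk to its target vertex, respectively to its source vertex, are bijections from
the set of anti-walks of `(G, ≤)` onto `V(G)`.  Moreover, the target half-edge of the
unique anti-walk with target vertex `α` is the maximal half-edge at `α`, and the source
half-edge of any anti-walk is the minimal half-edge at its source vertex. -/
theorem stmt6 {V H : Type} [Fintype V] [Fintype H] (G : MRG V H) :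
    Function.Bijective
      (fun w : {l : List (OE G) // G.IsAntiWalkL l} => OE.tvx (w.1.head w.2.1)) ∧
    Function.Bijective
      (fun w : {l : List (OE G) // G.IsAntiWalkL l} => OE.svx (w.1.getLast w.2.1)) ∧
    (∀ l : List (OE G), G.IsAntiWalkL l → ∀ i, l.head? = some i →
      ∀ h : H, G.z h = OE.tvx i → G.le h (OE.tH i)) ∧
    (∀ l : List (OE G), G.IsAntiWalkL l → ∀ i, l.getLast? = some i →
      ∀ h : H, G.z h = OE.svx i → G.le (OE.sH i) h) := by
  haveI : Finite (OE G) := Finite.of_injective (OE.tH (G := G)) (fun _ _ h => aux_ext_t G h)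
  refine ⟨⟨?_, ?_⟩, ⟨?_, ?_⟩, ?_, ?_⟩
  · rintro ⟨l, hl⟩ ⟨l', hl'⟩ h
    apply Subtype.ext
    have h0 := hl.1
    have h0' := hl'.1
    replace h : OE.tvx (l.head h0) = OE.tvx (l'.head h0') := h
    obtain ⟨-, -, h1, h2, h3⟩ := hl
    obtain ⟨-, -, h1', h2', h3'⟩ := hl'
    have e := List.head?_eq_some_head h0
    have e' := List.head?_eq_some_head h0'
    refine aux_unique (auxR G) (auxR_right G) l l' h0 h0' ?_ h1 h1' h3 h3'
    rw [e, e']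
    exact congrArg some (aux_ext_t G (G.le_antisymm
      (aux_head_max G _ (h2' _ e') _ h) (aux_head_max G _ (h2 _ e) _ h.symm)))
  · intro v
    obtain ⟨t, htv, ht⟩ := aux_exists_max G v
    obtain ⟨l, h1, h2, h3⟩ := aux_exists (auxR G) (auxR_left G) (auxOfT G t)
      (fun x hx => ht _ hx)
    have h0 : l ≠ [] := by rintro rfl; simp at h1
    refine ⟨⟨l, aux_mk G l h0 h2 ?_ h3⟩, ?_⟩
    · intro i hi i0 hR
      rw [h1] at hi
      obtain rfl := Option.some.inj hi
      exact ht _ hR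
    · have e := List.head?_eq_some_head h0
      rw [h1] at e
      change OE.tvx (l.head h0) = v
      rw [← Option.some.inj e]
      exact htv
  · rintro ⟨l, hl⟩ ⟨l', hl'⟩ h
    apply Subtype.ext
    have h0 := hl.1
    have h0' := hl'.1
    replace h : OE.svx (l.getLast h0) = OE.svx (l'.getLast h0') := h
    obtain ⟨-, -, h1, h2, h3⟩ := hl
    obtain ⟨-, -, h1', h2', h3'⟩ := hl'
    have e := List.getLast?_eq_some_getLast h0
    have e' := List.getLast?_eq_some_getLast h0'
    apply List.reverse_injective
    refine aux_unique (fun a b => auxR G b a) (fun a b c => auxR_left G b c a) l.reverse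
      l'.reverse (by simpa using h0) (by simpa using h0') ?_
      (List.isChain_reverse.2 h1) (List.isChain_reverse.2 h1')
      (fun i hi => h2 i (by simpa using hi)) (fun i hi => h2' i (by simpa using hi))
    rw [List.head?_reverse, List.head?_reverse, e, e']
    exact congrArg some (aux_ext_s G (G.le_antisymm
      (aux_last_min G _ (h3 _ e) _ h.symm) (aux_last_min G _ (h3' _ e') _ h)))
  · intro v
    obtain ⟨t, htv, ht⟩ := aux_exists_min G v
    obtain ⟨l, h1, h2, h3⟩ := aux_exists (fun a b => auxR G b a)
      (fun a b c => auxR_right G c a b) (auxOfS G t) (fun x hx => ht _ hx)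
    have h0 : l ≠ [] := by rintro rfl; simp at h1
    have h0' : l.reverse ≠ [] := by simpa using h0
    have hlast : l.reverse.getLast? = some (auxOfS G t) := by simpa using h1
    refine ⟨⟨l.reverse, aux_mk G l.reverse h0' (List.isChain_reverse.2 h2)
      (fun i hi => h3 i (by simpa using hi)) ?_⟩, ?_⟩
    · intro i hi i0 hR
      rw [hlast] at hi
      obtain rfl := Option.some.inj hi
      exact ht _ hR
    · have e := List.getLast?_eq_some_getLast h0'
      rw [hlast] at e
      change OE.svx (l.reverse.getLast h0') = v
      rw [← Option.some.inj e]
      exact htv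
  · intro l hl i hi h hz
    exact aux_head_max G i (hl.2.2.2.1 i hi) h hz
  · intro l hl i hi h hz
    exact aux_last_min G i (hl.2.2.2.2 i hi) h hz
end

section
/- Let (Q,I) be a gentle bound quiver with marked ribbon graph (G,≤) = △(Q,I), and identify the edges of G with the vertices Q0 of Q. For a reduced walk ij of length two in G (j ≠ i^{-1}), let ⟨i|j⟩ denote the corresponding homotopy letter of (Q,I): if the source half-edge of i is h^α_s and the target half-edge of j is h^α_t in the chain at a vertex α of G with s < t, then ⟨i|j⟩ := α_{s+1}⋯α_t is the corresponding permitted path of Q along the permitted thread η^α, and ⟨i|j⟩ := ⟨j^{-1}|i^{-1}⟩^{-1} when s > t. Then the map sending a reduced walk w = i1 i2 ⋯ iL i_{L+1} of G to ∇(w) := ⟨i1|i2⟩⟨i2|i3⟩⋯⟨iL|i_{L+1}⟩ is a bijection from the set of reduced walks of G of length at least two onto the set of non-trivial reduced walks of the quiver Q, and it satisfies ∇(w^{-1}) = ∇(w)^{-1}. -/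
set_option autoImplicit false

attribute [local instance] Classical.propDecidable

/-- A bound-quiver datum: a quiver (source and target maps on a set of arrows) together
with a set of length-two relations; `rel a b` means that the length-two path `ab`
(composable, i.e. `src a = tgt b`; paths are written from right to left) lies in the
generating set of relations of the ideal `I`. -/
structure BQuiv (V A : Type) where
  src : A → V
  tgt : A → V
  rel : A → A → Prop

namespace BQuiv

variable {V A : Type}

/-- `l` is (the list of arrows of) a path of the quiver, written from right to left:
`l = [a₁, a₂, …, a_ℓ]` represents `a₁a₂⋯a_ℓ` and we ask `src aₜ = tgt aₜ₊₁`. -/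
def PathChain (Q : BQuiv V A) (l : List A) : Prop :=
  l.Chain' (fun a b => Q.src a = Q.tgt b)

/-- The degree of a vertex: the number of outgoing plus the number of incoming arrows. -/
noncomputable def deg (Q : BQuiv V A) (v : V) : ℕ :=
  Nat.card {a : A // Q.src a = v} + Nat.card {a : A // Q.tgt a = v}

/-- `(Q, I)` is a gentle bound quiver. -/
structure IsGentle (Q : BQuiv V A) : Prop where
  /-- relations are composable length-two paths -/
  rel_comp : ∀ a b, Q.rel a b → Q.src a = Q.tgt b
  /-- at most two outgoing arrows at every vertex -/
  out_le : ∀ v, Nat.card {a : A // Q.src a = v} ≤ 2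
  /-- at most two incoming arrows at every vertex -/
  in_le : ∀ v, Nat.card {a : A // Q.tgt a = v} ≤ 2
  /-- for every arrow `b` there is at most one arrow `a` with `ab ∉ I` -/
  unique_nonrel_post : ∀ b a a', Q.src a = Q.tgt b → Q.src a' = Q.tgt b →
    ¬ Q.rel a b → ¬ Q.rel a' b → a = a'
  /-- for every arrow `b` there is at most one arrow `c` with `bc ∉ I` -/
  unique_nonrel_pre : ∀ b c c', Q.src b = Q.tgt c → Q.src b = Q.tgt c' →
    ¬ Q.rel b c → ¬ Q.rel b c' → c = c'
  /-- for every arrow `b` there is at most one arrow `a` with `ab ∈ I` -/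
  unique_rel_post : ∀ b a a', Q.rel a b → Q.rel a' b → a = a'
  /-- for every arrow `b` there is at most one arrow `c` with `bc ∈ I` -/
  unique_rel_pre : ∀ b c c', Q.rel b c → Q.rel b c' → c = c'
  /-- admissibility: there is `m ≥ 2` such that every path of length `m` contains a
  length-two subpath lying in the relation set -/
  admissible : ∃ m, 2 ≤ m ∧ ∀ l : List A, l.length = m → Q.PathChain l →
    ¬ l.Chain' (fun a b => ¬ Q.rel a b)
  /-- the quiver is connected -/
  connected : ∀ u v : V, Relation.ReflTransGen
    (fun x y => ∃ a, (Q.src a = x ∧ Q.tgt a = y) ∨ (Q.src a = y ∧ Q.tgt a = x)) u v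
  /-- the quiver has at least one arrow -/
  has_arrow : Nonempty A

/-- A path of the quiver `Q`, with a base (source) vertex so that trivial paths make
sense.  The arrows are written from right to left. -/
structure Path (Q : BQuiv V A) where
  base : V
  arrows : List A
  chain : arrows.Chain' (fun a b => Q.src a = Q.tgt b)
  base_eq : ∀ a, arrows.getLast? = some a → Q.src a = base

variable {Q : BQuiv V A}

/-- The source vertex of a path. -/
def Path.srcV (p : Path Q) : V := p.base

/-- The target vertex of a path. -/
def Path.tgtV (p : Path Q) : V := p.arrows.head?.elim p.base Q.tgt

/-- The vertex of a path sitting between its first `n` arrows and the rest: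
the center of the corresponding split of the path. -/
def Path.vertexAt (p : Path Q) (n : ℕ) : V :=
  (p.arrows.drop n).head?.elim p.base Q.tgt

/-- A path is permitted if none of its length-two subpaths is a relation. -/
def Path.Permitted (p : Path Q) : Prop :=
  p.arrows.Chain' (fun a b => ¬ Q.rel a b)

/-- A path is forbidden if each of its length-two subpaths is a relation. -/
def Path.Forbidden (p : Path Q) : Prop :=
  p.arrows.Chain' (fun a b => Q.rel a b)

/-- Permitted threads: maximal non-trivial permitted paths, together with the trivial
paths `e_i` at vertices `i` with `deg i = 1`, or `deg i = 2` with the two arrows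
`α, β` at `i` satisfying `src α = tgt β = i` and `αβ ∉ I`. -/
def IsPermThread (Q : BQuiv V A) (p : Path Q) : Prop :=
  (p.arrows ≠ [] ∧ p.Permitted ∧
    (∀ a b, p.arrows.head? = some b → Q.src a = Q.tgt b → Q.rel a b) ∧
    (∀ a c, p.arrows.getLast? = some a → Q.src a = Q.tgt c → Q.rel a c)) ∨
  (p.arrows = [] ∧ (Q.deg p.base = 1 ∨ (Q.deg p.base = 2 ∧
    ∃ α β, Q.src α = p.base ∧ Q.tgt β = p.base ∧ ¬ Q.rel α β)))

/-- Forbidden threads: maximal non-trivial forbidden paths, together with the trivial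
paths `e_i` at vertices `i` with `deg i = 1`, or `deg i = 2` with the two arrows
`α, β` at `i` satisfying `src α = tgt β = i` and `αβ ∈ I`. -/
def IsForbThread (Q : BQuiv V A) (p : Path Q) : Prop :=
  (p.arrows ≠ [] ∧ p.Forbidden ∧
    (∀ a b, p.arrows.head? = some b → Q.src a = Q.tgt b → ¬ Q.rel a b) ∧
    (∀ a c, p.arrows.getLast? = some a → Q.src a = Q.tgt c → ¬ Q.rel a c)) ∨
  (p.arrows = [] ∧ (Q.deg p.base = 1 ∨ (Q.deg p.base = 2 ∧
    ∃ α β, Q.src α = p.base ∧ Q.tgt β = p.base ∧ Q.rel α β)))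

end BQuiv

namespace BQuiv

variable {V A : Type}

/-- The type of permitted threads of `(Q, I)`: the vertices of the associated marked
ribbon graph `△(Q, I)`. -/
def PThread (Q : BQuiv V A) : Type := {p : Path Q // IsPermThread Q p}

/-- The type of split permitted threads of `(Q, I)`: a permitted thread together with a
cut position.  These are the half-edges of the associated marked ribbon graph
`△(Q, I)`. -/
def PSplit (Q : BQuiv V A) : Type := {x : PThread Q × ℕ // x.2 ≤ x.1.1.arrows.length}

/-- The thread (vertex of `△(Q, I)`) over which a split permitted thread lies. -/
def PSplit.thread {Q : BQuiv V A} (x : PSplit Q) : PThread Q := x.1.1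

/-- The cut position of a split permitted thread. -/
def PSplit.idx {Q : BQuiv V A} (x : PSplit Q) : ℕ := x.1.2

/-- The center of a split permitted thread `(η″, η′)`: the vertex `s(η″) = t(η′)`.
The centers realize the bijection between the edges of `△(Q, I)` and the vertices
of `Q`. -/
def PSplit.center {Q : BQuiv V A} (x : PSplit Q) : V :=
  x.1.1.1.vertexAt x.1.2

end BQuiv

namespace BQuiv

variable {V A : Type}

/-- The Cartan matrix of the gentle algebra `kQ/I`: its `(i, j)` entry is the number of
permitted paths with source `j` and target `i` (which equals `dim_k Hom(P_i, P_j)`). -/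
noncomputable def cartan (Q : BQuiv V A) : Matrix V V ℤ :=
  fun i j => (Nat.card {p : Path Q // p.Permitted ∧ p.base = j ∧ p.tgtV = i} : ℤ)

/-- The (edge-vertex) incidence matrix of the marked ribbon graph `△(Q, I)`, with edges
identified with `Q₀` (via centers) and vertices with the permitted threads (transported
along a bijection `e` with a finite index type `W`): the entry at `(i, w)` is the number
of half-edges of the edge `i` incident to the vertex `e w`, i.e. the number of split
permitted threads with center `i` lying over the thread `e w`. -/
noncomputable def dInc (Q : BQuiv V A) {W : Type} (e : W ≃ PThread Q) : Matrix V W ℤ :=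
  fun i w => (Nat.card {x : PSplit Q // x.center = i ∧ x.thread = e w} : ℤ)

end BQuiv

namespace BQuiv

variable {V A : Type}

/-- An ordered edge of the marked ribbon graph `△(Q, I)`: a pair `(h′, h″)` of
half-edges with `h″ = ι h′`, i.e. a pair of distinct split permitted threads with the
same center.  The first component is the target half-edge, the second the source
half-edge. -/
def DOE (Q : BQuiv V A) : Type :=
  {p : PSplit Q × PSplit Q // p.1 ≠ p.2 ∧ p.1.center = p.2.center}

/-- The target half-edge of an ordered edge of `△(Q, I)`. -/
def DOE.tS {Q : BQuiv V A} (i : DOE Q) : PSplit Q := i.1.1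

/-- The source half-edge of an ordered edge of `△(Q, I)`. -/
def DOE.sS {Q : BQuiv V A} (i : DOE Q) : PSplit Q := i.1.2

/-- The target vertex (a permitted thread) of an ordered edge of `△(Q, I)`. -/
def DOE.tvx {Q : BQuiv V A} (i : DOE Q) : PThread Q := i.1.1.thread

/-- The source vertex (a permitted thread) of an ordered edge of `△(Q, I)`. -/
def DOE.svx {Q : BQuiv V A} (i : DOE Q) : PThread Q := i.1.2.thread

/-- The underlying (unordered) edge of an ordered edge of `△(Q, I)`, identified with a
vertex of `Q` via centers. -/
def DOE.ctr {Q : BQuiv V A} (i : DOE Q) : V := i.1.1.center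

/-- The inverse of an ordered edge of `△(Q, I)`. -/
def DOE.inv {Q : BQuiv V A} (i : DOE Q) : DOE Q :=
  ⟨(i.1.2, i.1.1), ⟨Ne.symm i.2.1, i.2.2.symm⟩⟩

/-- `l` is (the list of ordered edges of) a walk of `△(Q, I)`, written from right to
left. -/
def IsDWalk (Q : BQuiv V A) (l : List (DOE Q)) : Prop :=
  l.Chain' (fun i j => DOE.svx i = DOE.tvx j)

/-- The walk `l` of `△(Q, I)` is reduced. -/
def IsDRed (Q : BQuiv V A) (l : List (DOE Q)) : Prop :=
  l.Chain' (fun i j => j ≠ DOE.inv i)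

/-- `y` is the direct successor of `x` in the half-edge order of `△(Q, I)`: `x` and `y`
lie over the same thread and `y` covers `x` (the half-edge `h^α_t` corresponds to the
split `(α, t)` and `h^α_t < h^α_{t-1}` is a covering). -/
def DSucc {Q : BQuiv V A} (x y : PSplit Q) : Prop :=
  x.thread = y.thread ∧ x.idx = y.idx + 1

/-- Anti-walks of `△(Q, I)`: non-trivial walks `i₁⋯i_{L+1}` in which the source
half-edge of `iₜ` is the direct successor of the target half-edge of `iₜ₊₁` with
respect to `≤`, maximal with this property. -/
def IsAntiDW (Q : BQuiv V A) (l : List (DOE Q)) : Prop :=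
  l ≠ [] ∧ IsDWalk Q l ∧
  l.Chain' (fun i j => DSucc (DOE.tS j) (DOE.sS i)) ∧
  (∀ i, l.head? = some i → ∀ i0 : DOE Q, ¬ DSucc (DOE.tS i) (DOE.sS i0)) ∧
  (∀ i, l.getLast? = some i → ∀ i2 : DOE Q, ¬ DSucc (DOE.tS i2) (DOE.sS i)) 

/-- The incidence vector of a walk `w = i₁⋯i_{L+1}` of `△(Q, I)`:
`inc(w) = Σₜ (-1)ᵗ e_{ē(i_{t+1})} ∈ ℤ^{Q₀}`. -/
noncomputable def incVec {Q : BQuiv V A} : List (DOE Q) → V → ℤ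
  | [] => fun _ => 0
  | i :: l => fun v => (if DOE.ctr i = v then 1 else 0) - incVec l v

end BQuiv

namespace BQuiv

variable {V A : Type}

/-- A letter of a walk of the quiver: an arrow `(a, true)` or a formal inverse
`(a, false)`. -/
abbrev Letter (A : Type) : Type := A × Bool

/-- The source vertex of a letter. -/
def lsrc (Q : BQuiv V A) (c : Letter A) : V := if c.2 then Q.src c.1 else Q.tgt c.1

/-- The target vertex of a letter. -/
def ltgt (Q : BQuiv V A) (c : Letter A) : V := if c.2 then Q.tgt c.1 else Q.src c.1

/-- The inverse of a letter. -/
def linv (c : Letter A) : Letter A := (c.1, !c.2)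

/-- `l` is (the list of letters of) a walk of the quiver, written from right to left. -/
def WalkChain (Q : BQuiv V A) (l : List (Letter A)) : Prop :=
  l.Chain' (fun c d => Q.lsrc c = Q.ltgt d)

/-- A walk is closed when its source equals its target. -/
def WalkClosed (Q : BQuiv V A) (l : List (Letter A)) : Prop :=
  ∀ c, l.head? = some c → ∀ d, l.getLast? = some d → Q.lsrc d = Q.ltgt c

/-- A walk has no repeated edges when no arrow occurs twice (in either direction). -/
def NoRepeatedEdges (l : List (Letter A)) : Prop := (l.map Prod.fst).Nodup

/-- The number of relations of `R` contained in the closed walk `w = c₁⋯c_ℓ`: the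
number of length-two subpaths of `w` or of `w⁻¹` lying in `R`, including the
wrap-around pairs `c_ℓc₁` and `c₁⁻¹c_ℓ⁻¹` when they consist of arrows and lie in `R`.
(Computed over the cyclically consecutive pairs of letters of `w`.) -/
noncomputable def relCount (Q : BQuiv V A) (l : List (Letter A)) : ℕ :=
  ((l.zip (l.rotate 1)).map (fun cd =>
    if (cd.1.2 = true ∧ cd.2.2 = true ∧ Q.rel cd.1.1 cd.2.1) ∨
       (cd.1.2 = false ∧ cd.2.2 = false ∧ Q.rel cd.2.1 cd.1.1)
    then (1 : ℕ) else 0)).sum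

/-- `(Q, I)` satisfies the multi-clock condition: every non-trivial closed walk of `Q`
without repeated edges contains an even number of relations. -/
def MultiClock (Q : BQuiv V A) : Prop :=
  ∀ l : List (Letter A), l ≠ [] → Q.WalkChain l → Q.WalkClosed l →
    NoRepeatedEdges l → Even (Q.relCount l)

end BQuiv

namespace BQuiv

variable {V A : Type}

/-- The homotopy letter `⟨i|j⟩` of `(Q, I)` associated with a reduced length-two walk
`ij` of `△(Q, I)`: if the source half-edge of `i` is `h^α_s` and the target half-edge
of `j` is `h^α_t` in the chain at the vertex (permitted thread) `α`, then for `s < t`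
it is the permitted path `α_{s+1}⋯α_t` of `Q` (a list of direct letters), and for
`s > t` it is the formal inverse `⟨j⁻¹|i⁻¹⟩⁻¹` (a list of inverse letters). -/
def letterOf {Q : BQuiv V A} (i j : DOE Q) : List (Letter A) :=
  let p := (DOE.sS i).thread
  let s := (DOE.sS i).idx
  let t := (DOE.tS j).idx
  if s < t then ((p.1.arrows.drop s).take (t - s)).map (fun a => (a, true))
  else (((p.1.arrows.drop t).take (s - t)).map (fun a => (a, false))).reverse

/-- The walk `∇(w)` of the quiver `Q` associated with a reduced walk
`w = i₁i₂⋯i_L i_{L+1}` of `△(Q, I)`: the concatenation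
`⟨i₁|i₂⟩⟨i₂|i₃⟩⋯⟨i_L|i_{L+1}⟩` of the homotopy letters of its consecutive pairs. -/
def nablaW {Q : BQuiv V A} (l : List (DOE Q)) : List (Letter A) :=
  (List.zipWith letterOf l l.tail).flatten

end BQuiv


namespace BQuiv

variable {V A : Type} {Q : BQuiv V A}

theorem thr_step (η : PThread Q) {n : ℕ} {a b : A} (ha : η.1.arrows[n]? = some a)
    (hb : η.1.arrows[n+1]? = some b) : Q.src a = Q.tgt b ∧ ¬ Q.rel a b := by
  obtain ⟨p, hp⟩ := η
  simp only at ha hb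
  obtain ⟨h1, rfl⟩ := List.getElem?_eq_some_iff.1 ha
  obtain ⟨h2, rfl⟩ := List.getElem?_eq_some_iff.1 hb
  refine ⟨List.isChain_iff_getElem.1 p.chain n h2, ?_⟩
  rcases hp with ⟨_, h, _⟩ | ⟨h, _⟩
  · exact List.isChain_iff_getElem.1 h n h2
  · simp [h] at h1

theorem thr_last (η : PThread Q) {n : ℕ} {a : A} (ha : η.1.arrows[n]? = some a)
    (hb : η.1.arrows[n+1]? = none) :
    (∀ c, Q.src a = Q.tgt c → Q.rel a c) ∧ Q.src a = η.1.base := by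
  obtain ⟨p, hp⟩ := η
  simp only at ha hb ⊢
  obtain ⟨h1, _⟩ := List.getElem?_eq_some_iff.1 ha
  have h2 := List.getElem?_eq_none_iff.1 hb
  have hl : p.arrows.getLast? = some a := by
    rw [List.getLast?_eq_getElem?, ← ha]; congr 1; omega
  refine ⟨?_, p.base_eq a hl⟩
  rcases hp with ⟨_, _, _, h⟩ | ⟨h, _⟩
  · exact fun c => h a c hl
  · simp [h] at h1

theorem thr_first (η : PThread Q) {b : A} (hb : η.1.arrows[0]? = some b) :
    ∀ a, Q.src a = Q.tgt b → Q.rel a b := by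
  obtain ⟨p, hp⟩ := η
  simp only at hb
  rcases hp with ⟨_, _, h, _⟩ | ⟨h, _⟩
  · exact fun a => h a b (by rw [List.head?_eq_getElem?, hb])
  · simp [h] at hb

theorem thr_ext {η η' : PThread Q} (h : η.1.arrows = η'.1.arrows)
    (hb : η.1.base = η'.1.base) : η = η' := by
  obtain ⟨⟨b, l, _, _⟩, _⟩ := η
  obtain ⟨⟨b', l', _, _⟩, _⟩ := η'
  simp only at h hb
  subst h hb
  rfl

theorem thr_right (hQ : Q.IsGentle) {η η' : PThread Q} {n n' : ℕ} {a : A}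
    (h : η.1.arrows[n]? = some a) (h' : η'.1.arrows[n']? = some a) (k : ℕ) :
    η.1.arrows[n+k]? = η'.1.arrows[n'+k]? := by
  induction k with
  | zero => simp [h, h']
  | succ k ih =>
    cases hc : η.1.arrows[n+k]? with
    | none =>
      rw [hc] at ih
      rw [List.getElem?_eq_none_iff] at hc
      have ih' := List.getElem?_eq_none_iff.1 ih.symm
      rw [List.getElem?_eq_none_iff.2 (by omega), List.getElem?_eq_none_iff.2 (by omega)]
    | some c =>
      have hc' := ih.symm.trans hc
      rw [← add_assoc, ← add_assoc]
      cases hd : η.1.arrows[n+k+1]? with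
      | none =>
        cases hd' : η'.1.arrows[n'+k+1]? with
        | none => rfl
        | some d' =>
          have s := thr_step η' hc' hd'
          exact absurd ((thr_last η hc hd).1 _ s.1) s.2
      | some d =>
        have s := thr_step η hc hd
        cases hd' : η'.1.arrows[n'+k+1]? with
        | none => exact absurd ((thr_last η' hc' hd').1 _ s.1) s.2
        | some d' =>
          have s' := thr_step η' hc' hd'
          rw [hQ.unique_nonrel_pre c d d' s.1 s'.1 s.2 s'.2]

theorem thr_left (hQ : Q.IsGentle) {η η' : PThread Q} {n n' : ℕ} {a : A}
    (h : η.1.arrows[n]? = some a) (h' : η'.1.arrows[n']? = some a) (k : ℕ) (hk : k ≤ n) :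
    k ≤ n' ∧ η.1.arrows[n-k]? = η'.1.arrows[n'-k]? := by
  induction k with
  | zero => simp [h, h']
  | succ k ih =>
    obtain ⟨i1, i2⟩ := ih (by omega)
    have hl := (List.getElem?_eq_some_iff.1 h).1
    obtain ⟨c, hc⟩ : ∃ c, η.1.arrows[n-k]? = some c :=
      ⟨_, List.getElem?_eq_getElem (by omega)⟩
    obtain ⟨d, hd⟩ : ∃ c, η.1.arrows[n-(k+1)]? = some c :=
      ⟨_, List.getElem?_eq_getElem (by omega)⟩
    have hc' := i2.symm.trans hc
    have e : n - k = n - (k+1) + 1 := by omega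
    rw [e] at hc
    have s := thr_step η hd hc
    have hlt : k + 1 ≤ n' := by
      by_contra hcon
      have e0 : n' - k = 0 := by omega
      rw [e0] at hc'
      exact s.2 (thr_first η' hc' d s.1)
    refine ⟨hlt, ?_⟩
    have hl' := (List.getElem?_eq_some_iff.1 h').1
    obtain ⟨d', hd'⟩ : ∃ c, η'.1.arrows[n'-(k+1)]? = some c :=
      ⟨_, List.getElem?_eq_getElem (by omega)⟩
    have e : n' - k = n' - (k+1) + 1 := by omega
    rw [e] at hc'
    have s' := thr_step η' hd' hc'
    rw [hd, hd', hQ.unique_nonrel_post c d d' s.1 s'.1 s.2 s'.2]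

theorem thr_unique (hQ : Q.IsGentle) {η η' : PThread Q} {n n' : ℕ} {a : A}
    (h : η.1.arrows[n]? = some a) (h' : η'.1.arrows[n']? = some a) : η = η' ∧ n = n' := by
  have hn : n = n' := le_antisymm (thr_left hQ h h' n le_rfl).1 (thr_left hQ h' h n' le_rfl).1
  subst hn
  refine ⟨?_, rfl⟩
  have harr : η.1.arrows = η'.1.arrows := by
    apply List.ext_getElem?
    intro i
    rcases le_total i n with hi | hi
    · have := (thr_left hQ h h' (n - i) (by omega)).2
      rwa [show n - (n - i) = i by omega] at this
    · have := thr_right hQ h h' (i - n)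
      rwa [show n + (i - n) = i by omega] at this
  have hl := (List.getElem?_eq_some_iff.1 h).1
  apply thr_ext harr
  obtain ⟨c, hc⟩ : ∃ c, η.1.arrows[η.1.arrows.length - 1]? = some c :=
    ⟨_, List.getElem?_eq_getElem (by omega)⟩
  have hc' := hc
  rw [harr] at hc'
  rw [← (thr_last η hc (List.getElem?_eq_none_iff.2 (by omega))).2,
    ← (thr_last η' hc' (List.getElem?_eq_none_iff.2 (by rw [← harr]; omega))).2]

theorem max_ext {S : A → A → Prop} (k : ℕ) : ∀ a,
    (∃ t : List A, t.length = k ∧ (a :: t).IsChain S) ∨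
    (∃ t : List A, (a :: t).IsChain S ∧ ∀ b, (a :: t).getLast? = some b → ∀ c, ¬ S b c) := by
  induction k with
  | zero => exact fun a => Or.inl ⟨[], rfl, by simp⟩
  | succ k ih =>
    intro a
    by_cases h : ∃ b, S a b
    · obtain ⟨b, hb⟩ := h
      rcases ih b with ⟨t, h1, h2⟩ | ⟨t, h1, h2⟩
      · exact Or.inl ⟨b :: t, by simp [h1], List.isChain_cons_cons.2 ⟨hb, h2⟩⟩
      · refine Or.inr ⟨b :: t, List.isChain_cons_cons.2 ⟨hb, h1⟩, ?_⟩
        rw [List.getLast?_cons_cons]; exact h2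
    · push Not at h
      exact Or.inr ⟨[], by simp, by simpa using h⟩

theorem chain_and {R S : A → A → Prop} {l : List A} :
    l.IsChain (fun a b => R a b ∧ S a b) ↔ l.IsChain R ∧ l.IsChain S := by
  simp only [List.isChain_iff_getElem]
  exact ⟨fun h => ⟨fun i hi => (h i hi).1, fun i hi => (h i hi).2⟩,
    fun h i hi => ⟨h.1 i hi, h.2 i hi⟩⟩

theorem thr_exists (hQ : Q.IsGentle) (a : A) :
    ∃ (η : PThread Q) (n : ℕ), η.1.arrows[n]? = some a := by
  obtain ⟨m, hm, hadm⟩ := hQ.admissible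
  let S : A → A → Prop := fun a b => Q.src a = Q.tgt b ∧ ¬ Q.rel a b
  have hno : ∀ l : List A, l.length = m → ¬ l.IsChain S := by
    intro l hl hc
    have := chain_and.1 hc
    exact hadm l hl this.1 this.2
  rcases max_ext (S := S) (m-1) a with ⟨t, h1, h2⟩ | ⟨t, ht, htm⟩
  · exact absurd h2 (hno _ (by simp; omega))
  rcases max_ext (S := fun a b => S b a) (m-1) a with ⟨s, h1, h2⟩ | ⟨s, hs, hsm⟩
  · exact absurd (List.isChain_reverse.2 h2) (hno _ (by simp; omega))
  have hs' := List.isChain_reverse.2 hs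
  rw [List.reverse_cons] at hs'
  have hall : (s.reverse ++ a :: t).IsChain S := List.isChain_split.2 ⟨hs', ht⟩
  have h2 := chain_and.1 hall
  have hlast : ∀ b, (s.reverse ++ a :: t).getLast? = some b ↔ (a :: t).getLast? = some b := by
    intro b; rw [List.getLast?_append_of_ne_nil _ (by simp)]
  have hhead : ∀ b, (s.reverse ++ a :: t).head? = some b → (a :: s).getLast? = some b := by
    intro b hb
    rw [← List.head?_reverse, List.reverse_cons]
    cases hr : s.reverse with
    | nil => simpa [hr] using hb
    | cons x y => simpa [hr] using hb
  refine ⟨⟨⟨Q.src ((a :: t).getLast (by simp)), s.reverse ++ a :: t, h2.1, ?_⟩, ?_⟩, s.length, ?_⟩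
  · intro b hb
    rw [hlast, List.getLast?_eq_some_getLast (by simp)] at hb
    rw [Option.some.inj hb]
  · left
    refine ⟨by simp, h2.2, ?_, ?_⟩
    · intro c b hb hc
      by_contra hr
      exact hsm b (hhead b hb) c ⟨hc, hr⟩
    · intro b c hb hc
      by_contra hr
      exact htm b ((hlast b).1 hb) c ⟨hc, hr⟩
  · simp

def HasOut (x : PSplit Q) (a : A) : Prop :=
  ∃ n, x.idx = n + 1 ∧ x.thread.1.arrows[n]? = some a

def HasIn (x : PSplit Q) (a : A) : Prop := x.thread.1.arrows[x.idx]? = some a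

theorem split_ext {x y : PSplit Q} (h : x.thread = y.thread) (h' : x.idx = y.idx) : x = y :=
  Subtype.ext (Prod.ext h h')

theorem HasOut.unique (hQ : Q.IsGentle) {x y : PSplit Q} {a : A} (h : HasOut x a)
    (h' : HasOut y a) : x = y := by
  obtain ⟨n, h1, h2⟩ := h
  obtain ⟨n', h1', h2'⟩ := h'
  obtain ⟨e, e'⟩ := thr_unique hQ h2 h2'
  exact split_ext e (by omega)

theorem HasIn.unique (hQ : Q.IsGentle) {x y : PSplit Q} {a : A} (h : HasIn x a)
    (h' : HasIn y a) : x = y := by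
  obtain ⟨e, e'⟩ := thr_unique hQ h h'
  exact split_ext e e'

theorem center_eq (x : PSplit Q) :
    x.center = (x.thread.1.arrows[x.idx]?).elim x.thread.1.base Q.tgt := by
  rw [← List.head?_drop]; rfl

theorem HasIn.center {x : PSplit Q} {a : A} (h : HasIn x a) : Q.tgt a = x.center := by
  rw [center_eq, h]; rfl

theorem HasOut.center {x : PSplit Q} {a : A} (h : HasOut x a) : Q.src a = x.center := by
  obtain ⟨n, h1, h2⟩ := h
  rw [center_eq, h1]
  cases h3 : x.thread.1.arrows[n+1]? with
  | none => exact (thr_last _ h2 h3).2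
  | some b => exact (thr_step _ h2 h3).1

theorem exists_in_out (hQ : Q.IsGentle) (a : A) : ∃ x y : PSplit Q, HasIn x a ∧ HasOut y a := by
  obtain ⟨η, n, h⟩ := thr_exists hQ a
  have hl := (List.getElem?_eq_some_iff.1 h).1
  exact ⟨⟨(η, n), hl.le⟩, ⟨(η, n+1), hl⟩, h, n, rfl, h⟩

theorem HasOut.toIn (hQ : Q.IsGentle) {x : PSplit Q} {a b : A} (h : HasOut x a)
    (hab : Q.src a = Q.tgt b) (hr : ¬ Q.rel a b) : HasIn x b := by
  obtain ⟨n, h1, h2⟩ := h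
  unfold HasIn
  rw [h1]
  cases h3 : x.thread.1.arrows[n+1]? with
  | none => exact absurd ((thr_last _ h2 h3).1 b hab) hr
  | some c =>
    have s := thr_step _ h2 h3
    rw [hQ.unique_nonrel_pre a b c hab s.1 hr s.2]

theorem HasIn.toOut (hQ : Q.IsGentle) {x : PSplit Q} {a b : A} (h : HasIn x b)
    (hab : Q.src a = Q.tgt b) (hr : ¬ Q.rel a b) : HasOut x a := by
  obtain ⟨y, z, hy, hz⟩ := exists_in_out hQ a
  have := hz.toIn hQ hab hr
  rwa [h.unique hQ this]

theorem rel_of (hQ : Q.IsGentle) {x y : PSplit Q} {a b : A} (hxy : x ≠ y)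
    (hc : x.center = y.center) (hx : HasOut x a) (hy : HasIn y b) : Q.rel a b := by
  by_contra hr
  have hab : Q.src a = Q.tgt b := by rw [hx.center, hy.center, hc]
  exact hxy ((hx.toIn hQ hab hr).unique hQ hy)

theorem HasOut.arr_unique {x : PSplit Q} {a b : A} (h : HasOut x a) (h' : HasOut x b) : a = b := by
  obtain ⟨n, h1, h2⟩ := h
  obtain ⟨n', h1', h2'⟩ := h'
  obtain rfl : n = n' := by omega
  rw [h2] at h2'; exact Option.some.inj h2'

theorem HasIn.arr_unique {x : PSplit Q} {a b : A} (h : HasIn x a) (h' : HasIn x b) : a = b :=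
  Option.some.inj (h.symm.trans h')

theorem not_rel_of {x : PSplit Q} {a b : A} (h : HasOut x a) (h' : HasIn x b) : ¬ Q.rel a b := by
  obtain ⟨n, h1, h2⟩ := h
  unfold HasIn at h'
  rw [h1] at h'
  exact (thr_step _ h2 h').2

theorem split_cases (x : PSplit Q) : (∃ a, HasOut x a) ∨ (∃ a, HasIn x a) ∨
    (x.thread.1.arrows = [] ∧ x.idx = 0 ∧ x.center = x.thread.1.base ∧
     (Q.deg x.center = 1 ∨ (Q.deg x.center = 2 ∧
    ∃ α β, Q.src α = x.center ∧ Q.tgt β = x.center ∧ ¬ Q.rel α β))) := by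
  have hx : x.idx ≤ x.thread.1.arrows.length := x.2
  by_cases h0 : x.thread.1.arrows = []
  · right; right
    have h1 : x.idx = 0 := by simpa [h0] using hx
    have h2 : x.center = x.thread.1.base := by rw [center_eq, h0]; rfl
    refine ⟨h0, h1, h2, ?_⟩
    rw [h2]
    rcases x.thread.2 with h | h
    · exact absurd h0 h.1
    · exact h.2
  · have := List.length_pos_of_ne_nil h0
    rcases hi : x.idx with _ | n
    · right; left
      exact ⟨_, by rw [HasIn, hi]; exact List.getElem?_eq_getElem this⟩
    · left
      exact ⟨_, n, hi, List.getElem?_eq_getElem (by omega)⟩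

theorem card_two [Fintype A] {P : A → Prop} (h : Nat.card {a // P a} ≤ 2) {a b c : A}
    (ha : P a) (hb : P b) (hc : P c) (hab : a ≠ b) (hac : a ≠ c) (hbc : b ≠ c) : False := by
  rw [Nat.card_eq_fintype_card] at h
  have := Fintype.two_lt_card_iff.2 ⟨(⟨a, ha⟩ : {a // P a}), ⟨b, hb⟩, ⟨c, hc⟩,
    by simpa using hab, by simpa using hac, by simpa using hbc⟩
  omega

theorem card_ge_one [Fintype A] {P : A → Prop} {a : A} (ha : P a) : 1 ≤ Nat.card {a // P a} := by
  have : Nonempty {a // P a} := ⟨⟨a, ha⟩⟩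
  exact Nat.card_pos

theorem card_le_one [Fintype A] {P : A → Prop} (h : Nat.card {a // P a} ≤ 1) {a b : A}
    (ha : P a) (hb : P b) : a = b := by
  have := (Finite.card_le_one_iff_subsingleton (α := {a // P a})).1 h
  exact congrArg Subtype.val (Subsingleton.elim (⟨a, ha⟩ : {a // P a}) ⟨b, hb⟩)

theorem triv_unique {x y : PSplit Q} (hc : x.center = y.center) (h : x.thread.1.arrows = [])
    (hi : x.idx = 0) (hb : x.center = x.thread.1.base) (h' : y.thread.1.arrows = [])
    (hi' : y.idx = 0) (hb' : y.center = y.thread.1.base) : x = y :=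
  split_ext (thr_ext (h.trans h'.symm) (by rw [← hb, ← hb', hc])) (hi.trans hi'.symm)

theorem triv_other [Fintype A] (hQ : Q.IsGentle) {y z : PSplit Q} (hc : y.center = z.center)
    (hd : Q.deg y.center = 1 ∨ (Q.deg y.center = 2 ∧
      ∃ α β, Q.src α = y.center ∧ Q.tgt β = y.center ∧ ¬ Q.rel α β))
    (hy : (∃ a, HasOut y a) ∨ (∃ a, HasIn y a)) (hz : (∃ a, HasOut z a) ∨ (∃ a, HasIn z a)) :
    y = z := by
  unfold deg at hd
  have key : (∀ a b, Q.src a = y.center → Q.src b = y.center → a = b) ∧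
      (∀ a b, Q.tgt a = y.center → Q.tgt b = y.center → a = b) ∧
      (∀ a b, Q.src a = y.center → Q.tgt b = y.center → ¬ Q.rel a b) := by
    rcases hd with hd | ⟨hd, α, β, h1, h2, h3⟩
    · refine ⟨fun a b ha hb => card_le_one (P := fun a => Q.src a = y.center) (by omega) ha hb,
        fun a b ha hb => card_le_one (P := fun a => Q.tgt a = y.center) (by omega) ha hb,
        fun a b ha hb => ?_⟩
      have := card_ge_one (P := fun a => Q.src a = y.center) ha
      have := card_ge_one (P := fun a => Q.tgt a = y.center) hb
      omega
    · have := card_ge_one (P := fun a => Q.src a = y.center) h1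
      have := card_ge_one (P := fun a => Q.tgt a = y.center) h2
      have k1 : ∀ a b, Q.src a = y.center → Q.src b = y.center → a = b := fun a b ha hb =>
        card_le_one (P := fun a => Q.src a = y.center) (by omega) ha hb
      have k2 : ∀ a b, Q.tgt a = y.center → Q.tgt b = y.center → a = b := fun a b ha hb =>
        card_le_one (P := fun a => Q.tgt a = y.center) (by omega) ha hb
      refine ⟨k1, k2, fun a b ha hb => ?_⟩
      rwa [k1 a α ha h1, k2 b β hb h2]
  obtain ⟨k1, k2, k3⟩ := key
  rcases hy with ⟨a, hy⟩ | ⟨a, hy⟩ <;> rcases hz with ⟨b, hz⟩ | ⟨b, hz⟩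
  · have := k1 a b hy.center (hz.center.trans hc.symm)
    subst this; exact hy.unique hQ hz
  · by_contra hne
    exact k3 a b hy.center (hz.center.trans hc.symm) (rel_of hQ hne hc hy hz)
  · by_contra hne
    exact k3 b a (hz.center.trans hc.symm) hy.center (rel_of hQ (Ne.symm hne) hc.symm hz hy)
  · have := k2 a b hy.center (hz.center.trans hc.symm)
    subst this; exact hy.unique hQ hz

theorem no_ooi (hQ : Q.IsGentle) {x y z : PSplit Q} {a b c : A} (hxy : x ≠ y) (hxz : x ≠ z)
    (hyz : y ≠ z) (h1 : x.center = y.center) (h2 : x.center = z.center)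
    (hx : HasOut x a) (hy : HasOut y b) (hz : HasIn z c) : False := by
  have := hQ.unique_rel_post c a b (rel_of hQ hxz h2 hx hz)
    (rel_of hQ hyz (h1.symm.trans h2) hy hz)
  subst this; exact hxy (hx.unique hQ hy)

theorem no_oii (hQ : Q.IsGentle) {x y z : PSplit Q} {a b c : A} (hxy : x ≠ y) (hxz : x ≠ z)
    (hyz : y ≠ z) (h1 : x.center = y.center) (h2 : x.center = z.center)
    (hx : HasOut x a) (hy : HasIn y b) (hz : HasIn z c) : False := by
  have := hQ.unique_rel_pre a b c (rel_of hQ hxy h1 hx hy)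
    (rel_of hQ hxz h2 hx hz)
  subst this; exact hyz (hy.unique hQ hz)

theorem no_three [Fintype A] (hQ : Q.IsGentle) {x y z : PSplit Q} (hxy : x ≠ y) (hxz : x ≠ z)
    (hyz : y ≠ z) (h1 : x.center = y.center) (h2 : x.center = z.center) : False := by
  have h3 : y.center = z.center := h1.symm.trans h2
  have ooo : ∀ a b c, HasOut x a → HasOut y b → HasOut z c → False := by
    intro a b c ha hb hc
    refine card_two (hQ.out_le x.center) ha.center (hb.center.trans h1.symm)
      (hc.center.trans h2.symm) ?_ ?_ ?_ <;> rintro rfl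
    · exact hxy (ha.unique hQ hb)
    · exact hxz (ha.unique hQ hc)
    · exact hyz (hb.unique hQ hc)
  have iii : ∀ a b c, HasIn x a → HasIn y b → HasIn z c → False := by
    intro a b c ha hb hc
    refine card_two (hQ.in_le x.center) ha.center (hb.center.trans h1.symm)
      (hc.center.trans h2.symm) ?_ ?_ ?_ <;> rintro rfl
    · exact hxy (ha.unique hQ hb)
    · exact hxz (ha.unique hQ hc)
    · exact hyz (hb.unique hQ hc)
  have T : ∀ x y z : PSplit Q, x ≠ y → x ≠ z → y ≠ z → x.center = y.center →
      x.center = z.center → (x.thread.1.arrows = [] ∧ x.idx = 0 ∧ x.center = x.thread.1.base ∧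
     (Q.deg x.center = 1 ∨ (Q.deg x.center = 2 ∧
    ∃ α β, Q.src α = x.center ∧ Q.tgt β = x.center ∧ ¬ Q.rel α β))) → False := by
    rintro x y z hxy hxz hyz h1 h2 ⟨t1, t2, t3, t4⟩
    refine hyz (triv_other hQ (h1.symm.trans h2) (h1 ▸ t4) ?_ ?_)
    · rcases split_cases y with h | h | h
      · exact Or.inl h
      · exact Or.inr h
      · exact absurd (triv_unique h1 t1 t2 t3 h.1 h.2.1 h.2.2.1) hxy
    · rcases split_cases z with h | h | h
      · exact Or.inl h
      · exact Or.inr h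
      · exact absurd (triv_unique h2 t1 t2 t3 h.1 h.2.1 h.2.2.1) hxz
  rcases split_cases x with ⟨a, hx⟩ | ⟨a, hx⟩ | hx
  · rcases split_cases y with ⟨b, hy⟩ | ⟨b, hy⟩ | hy
    · rcases split_cases z with ⟨c, hz⟩ | ⟨c, hz⟩ | hz
      · exact ooo a b c hx hy hz
      · exact no_ooi hQ hxy hxz hyz h1 h2 hx hy hz
      · exact T z x y hxz.symm hyz.symm hxy h2.symm h3.symm hz
    · rcases split_cases z with ⟨c, hz⟩ | ⟨c, hz⟩ | hz
      · exact no_ooi hQ hxz hxy hyz.symm h2 h1 hx hz hy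
      · exact no_oii hQ hxy hxz hyz h1 h2 hx hy hz
      · exact T z x y hxz.symm hyz.symm hxy h2.symm h3.symm hz
    · exact T y x z hxy.symm hyz hxz h1.symm h3 hy
  · rcases split_cases y with ⟨b, hy⟩ | ⟨b, hy⟩ | hy
    · rcases split_cases z with ⟨c, hz⟩ | ⟨c, hz⟩ | hz
      · exact no_ooi hQ hyz hxy.symm hxz.symm h3 h1.symm hy hz hx
      · exact no_oii hQ hxy.symm hyz hxz h1.symm h3 hy hx hz
      · exact T z x y hxz.symm hyz.symm hxy h2.symm h3.symm hz
    · rcases split_cases z with ⟨c, hz⟩ | ⟨c, hz⟩ | hz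
      · exact no_oii hQ hxz.symm hyz.symm hxy h2.symm h3.symm hz hx hy
      · exact iii a b c hx hy hz
      · exact T z x y hxz.symm hyz.symm hxy h2.symm h3.symm hz
    · exact T y x z hxy.symm hyz hxz h1.symm h3 hy
  · exact T x y z hxy hxz hyz h1 h2 hx

theorem exists_other [Fintype A] (hQ : Q.IsGentle) (x : PSplit Q) :
    ∃ y, y ≠ x ∧ y.center = x.center := by
  by_cases ho : ∃ a, Q.src a = x.center ∧ ¬ HasOut x a
  · obtain ⟨a, h1, h2⟩ := ho
    obtain ⟨_, y, _, hy⟩ := exists_in_out hQ a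
    exact ⟨y, fun e => h2 (e ▸ hy), hy.center.symm.trans h1⟩
  by_cases hi : ∃ a, Q.tgt a = x.center ∧ ¬ HasIn x a
  · obtain ⟨a, h1, h2⟩ := hi
    obtain ⟨y, _, hy, _⟩ := exists_in_out hQ a
    exact ⟨y, fun e => h2 (e ▸ hy), hy.center.symm.trans h1⟩
  push Not at ho hi
  have hO : Nat.card {a // Q.src a = x.center} ≤ 1 := by
    rw [Finite.card_le_one_iff_subsingleton]
    exact ⟨fun a b => Subtype.ext ((ho a a.2).arr_unique (ho b b.2))⟩
  have hI : Nat.card {a // Q.tgt a = x.center} ≤ 1 := by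
    rw [Finite.card_le_one_iff_subsingleton]
    exact ⟨fun a b => Subtype.ext ((hi a a.2).arr_unique (hi b b.2))⟩
  have mk : (Q.deg x.center = 1 ∨ (Q.deg x.center = 2 ∧
      ∃ α β, Q.src α = x.center ∧ Q.tgt β = x.center ∧ ¬ Q.rel α β)) →
      x.thread.1.arrows ≠ [] → ∃ y, y ≠ x ∧ y.center = x.center := by
    intro h hne
    let p : Path Q := ⟨x.center, [], by simp [List.Chain'], by simp⟩
    let y : PSplit Q := ⟨(⟨p, Or.inr ⟨rfl, h⟩⟩, 0), le_rfl⟩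
    refine ⟨y, ?_, rfl⟩
    intro e
    exact hne (e ▸ rfl)
  have nein : ∀ a, HasIn x a → x.thread.1.arrows ≠ [] := by
    intro a h h0; unfold HasIn at h; simp [h0] at h
  have neout : ∀ a, HasOut x a → x.thread.1.arrows ≠ [] := by
    rintro a ⟨n, _, h⟩ h0; simp [h0] at h
  by_cases h1 : ∃ a, HasOut x a
  · obtain ⟨a, ha⟩ := h1
    have c1 := card_ge_one (P := fun a => Q.src a = x.center) ha.center
    by_cases h2 : ∃ b, HasIn x b
    · obtain ⟨b, hb⟩ := h2
      have c2 := card_ge_one (P := fun a => Q.tgt a = x.center) hb.center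
      exact mk (Or.inr ⟨by unfold deg; omega, a, b, ha.center, hb.center, not_rel_of ha hb⟩)
        (nein b hb)
    · have c2 : Nat.card {a // Q.tgt a = x.center} = 0 := by
        have : IsEmpty {a // Q.tgt a = x.center} := ⟨fun b => h2 ⟨_, hi b b.2⟩⟩
        exact Nat.card_of_isEmpty
      exact mk (Or.inl (by unfold deg; omega)) (neout a ha)
  · have c1 : Nat.card {a // Q.src a = x.center} = 0 := by
      have : IsEmpty {a // Q.src a = x.center} := ⟨fun b => h1 ⟨_, ho b b.2⟩⟩
      exact Nat.card_of_isEmpty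
    by_cases h2 : ∃ b, HasIn x b
    · obtain ⟨b, hb⟩ := h2
      have c2 := card_ge_one (P := fun a => Q.tgt a = x.center) hb.center
      exact mk (Or.inl (by unfold deg; omega)) (nein b hb)
    · have c2 : Nat.card {a // Q.tgt a = x.center} = 0 := by
        have : IsEmpty {a // Q.tgt a = x.center} := ⟨fun b => h2 ⟨_, hi b b.2⟩⟩
        exact Nat.card_of_isEmpty
      rcases split_cases x with h | h | ⟨_, _, _, h | h⟩
      · exact absurd h h1
      · exact absurd h h2
      · unfold deg at h; omega
      · have := h.1; unfold deg at this; omega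

end BQuiv

namespace BQuiv

variable {V A : Type} {Q : BQuiv V A}

def Step (x : PSplit Q) (c : Letter A) (y : PSplit Q) : Prop :=
  (c.2 = true ∧ HasIn x c.1 ∧ HasOut y c.1) ∨ (c.2 = false ∧ HasOut x c.1 ∧ HasIn y c.1)

theorem Step.unique (hQ : Q.IsGentle) {x y x' y' : PSplit Q} {c : Letter A} (h : Step x c y)
    (h' : Step x' c y') : x = x' ∧ y = y' := by
  rcases h with ⟨h0, h1, h2⟩ | ⟨h0, h1, h2⟩ <;> rcases h' with ⟨h0', h1', h2'⟩ | ⟨h0', h1', h2'⟩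
  · exact ⟨h1.unique hQ h1', h2.unique hQ h2'⟩
  · rw [h0] at h0'; cases h0'
  · rw [h0] at h0'; cases h0'
  · exact ⟨h1.unique hQ h1', h2.unique hQ h2'⟩

theorem Step.inv {x y : PSplit Q} {c : Letter A} (h : Step x c y) : Step y (linv c) x := by
  rcases h with ⟨h0, h1, h2⟩ | ⟨h0, h1, h2⟩
  · exact Or.inr ⟨by simp [linv, h0], h2, h1⟩
  · exact Or.inl ⟨by simp [linv, h0], h2, h1⟩

theorem Step.exists (hQ : Q.IsGentle) (c : Letter A) : ∃ x y : PSplit Q, Step x c y := by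
  obtain ⟨x, y, hx, hy⟩ := exists_in_out hQ c.1
  cases h : c.2
  · exact ⟨y, x, Or.inr ⟨h, hy, hx⟩⟩
  · exact ⟨x, y, Or.inl ⟨h, hx, hy⟩⟩

theorem Step.ltgt {x y : PSplit Q} {c : Letter A} (h : Step x c y) : Q.ltgt c = x.center := by
  rcases h with ⟨h0, h1, h2⟩ | ⟨h0, h1, h2⟩
  · simp [BQuiv.ltgt, h0, h1.center]
  · simp [BQuiv.ltgt, h0, h1.center]

theorem Step.lsrc {x y : PSplit Q} {c : Letter A} (h : Step x c y) : Q.lsrc c = y.center := by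
  rcases h with ⟨h0, h1, h2⟩ | ⟨h0, h1, h2⟩
  · simp [BQuiv.lsrc, h0, h2.center]
  · simp [BQuiv.lsrc, h0, h2.center]

theorem geom (hQ : Q.IsGentle) {x y : PSplit Q} {a : A} (hx : HasIn x a) (hy : HasOut y a) :
    x.thread = y.thread ∧ y.idx = x.idx + 1 := by
  obtain ⟨n, h1, h2⟩ := hy
  obtain ⟨e, e'⟩ := thr_unique hQ hx h2
  exact ⟨e, by omega⟩

theorem Step.thread (hQ : Q.IsGentle) {x y : PSplit Q} {c : Letter A} (h : Step x c y) :
    x.thread = y.thread := by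
  rcases h with ⟨h0, h1, h2⟩ | ⟨h0, h1, h2⟩
  · exact (geom hQ h1 h2).1
  · exact (geom hQ h2 h1).1.symm

theorem Step.ne (hQ : Q.IsGentle) {x y : PSplit Q} {c : Letter A} (h : Step x c y) : x ≠ y := by
  rintro rfl
  rcases h with ⟨h0, h1, h2⟩ | ⟨h0, h1, h2⟩
  · have := (geom hQ h1 h2).2; omega
  · have := (geom hQ h2 h1).2; omega

theorem Step.same_dir {x y z : PSplit Q} {c d : Letter A} (h : Step x c y) (h' : Step y d z)
    (hne : c ≠ linv d) : c.2 = d.2 := by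
  rcases h with ⟨h0, h1, h2⟩ | ⟨h0, h1, h2⟩ <;> rcases h' with ⟨h0', h1', h2'⟩ | ⟨h0', h1', h2'⟩
  · rw [h0, h0']
  · exact absurd (show c = linv d from Prod.ext (h2.arr_unique h1') (by simp [linv, h0, h0'])) hne
  · exact absurd (show c = linv d from Prod.ext (h2.arr_unique h1') (by simp [linv, h0, h0'])) hne
  · rw [h0, h0']

def Dir (c : Letter A) (x y : PSplit Q) : Prop :=
  x.thread = y.thread ∧ (c.2 = true → x.idx ≤ y.idx) ∧ (c.2 = false → y.idx ≤ x.idx)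

def seg (x y : PSplit Q) : List (Letter A) :=
  if x.idx < y.idx then
    ((x.thread.1.arrows.drop x.idx).take (y.idx - x.idx)).map (fun a => (a, true))
  else (((x.thread.1.arrows.drop y.idx).take (x.idx - y.idx)).map (fun a => (a, false))).reverse

theorem letterOf_eq (i j : DOE Q) : letterOf i j = seg (DOE.sS i) (DOE.tS j) := rfl

theorem seg_self (x : PSplit Q) : seg x x = [] := by simp [seg]

theorem seg_cons (hQ : Q.IsGentle) {x x' y : PSplit Q} {c : Letter A} (h : Step x c x')
    (hd : Dir c x' y) : seg x y = c :: seg x' y := by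
  obtain ⟨hd0, hd1, hd2⟩ := hd
  obtain ⟨a, b⟩ := c
  rcases h with ⟨h0, h1, h2⟩ | ⟨h0, h1, h2⟩
  · simp only at h0 h1 h2
    subst h0
    obtain ⟨g1, g2⟩ := geom hQ h1 h2
    have hle := hd1 rfl
    have hl := List.getElem?_eq_some_iff.1 h1
    have e1 : seg x y =
        ((x.thread.1.arrows.drop x.idx).take (y.idx - x.idx)).map (fun a => (a, true)) := by
      unfold seg; rw [if_pos (by omega)]
    have e2 : seg x' y =
        ((x'.thread.1.arrows.drop x'.idx).take (y.idx - x'.idx)).map (fun a => (a, true)) := by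
      unfold seg
      split_ifs with hlt
      · rfl
      · have : y.idx = x'.idx := by omega
        simp [this]
    rw [e1, e2, ← g1, g2, List.drop_eq_getElem_cons hl.1, hl.2,
      show y.idx - x.idx = (y.idx - (x.idx + 1)) + 1 by omega]
    simp
  · simp only at h0 h1 h2
    subst h0
    obtain ⟨g1, g2⟩ := geom hQ h2 h1
    have hle := hd2 rfl
    unfold seg
    rw [if_neg (by omega), if_neg (by omega), g1,
      show x.idx - y.idx = (x'.idx - y.idx) + 1 by omega, List.take_add_one, List.getElem?_drop,
      show y.idx + (x'.idx - y.idx) = x'.idx by omega, ← g1, h2]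
    simp

theorem seg_cases (hQ : Q.IsGentle) {x y : PSplit Q} (ht : x.thread = y.thread) (hne : x ≠ y) :
    ∃ c x', Step x c x' ∧ Dir c x' y ∧ seg x y = c :: seg x' y := by
  suffices ∃ c x', Step x c x' ∧ Dir c x' y by
    obtain ⟨c, x', h1, h2⟩ := this
    exact ⟨c, x', h1, h2, seg_cons hQ h1 h2⟩
  have hx : x.idx ≤ x.thread.1.arrows.length := x.2
  have hy : y.idx ≤ y.thread.1.arrows.length := y.2
  rcases lt_trichotomy x.idx y.idx with h | h | h
  · rw [← ht] at hy
    have hl : x.idx < x.thread.1.arrows.length := by omega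
    refine ⟨(x.thread.1.arrows[x.idx], true), ⟨(x.thread, x.idx + 1), hl⟩,
      Or.inl ⟨rfl, List.getElem?_eq_getElem hl, x.idx, rfl, List.getElem?_eq_getElem hl⟩,
      ht, fun _ => h, fun h => by cases h⟩
  · exact absurd (split_ext ht h) hne
  · obtain ⟨n, hn⟩ : ∃ n, x.idx = n + 1 := ⟨x.idx - 1, by omega⟩
    have hl : n < x.thread.1.arrows.length := by omega
    refine ⟨(x.thread.1.arrows[n], false), ⟨(x.thread, n), hl.le⟩,
      Or.inr ⟨rfl, ⟨n, hn, List.getElem?_eq_getElem hl⟩, List.getElem?_eq_getElem hl⟩,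
      ht, fun h => (by cases h), fun _ => ?_⟩
    change y.idx ≤ n
    omega

theorem Dir.back (hQ : Q.IsGentle) {x x' y : PSplit Q} {c : Letter A} (h : Step x c x')
    (hd : Dir c x' y) : Dir c x y ∧ x ≠ y := by
  obtain ⟨hd0, hd1, hd2⟩ := hd
  have ht := h.thread hQ
  rcases h with ⟨h0, h1, h2⟩ | ⟨h0, h1, h2⟩
  · have g := (geom hQ h1 h2).2
    have := hd1 h0
    refine ⟨⟨ht.trans hd0, fun _ => by omega, fun h => ?_⟩, ?_⟩
    · rw [h0] at h; cases h
    · rintro rfl; omega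
  · have g := (geom hQ h2 h1).2
    have := hd2 h0
    refine ⟨⟨ht.trans hd0, fun h => ?_, fun _ => by omega⟩, ?_⟩
    · rw [h0] at h; cases h
    · rintro rfl; omega

theorem Dir.same (hQ : Q.IsGentle) {x x' y : PSplit Q} {c d : Letter A} (h : Step x d x')
    (hd : Dir d x' y) (hc : Dir c x y) : c.2 = d.2 := by
  obtain ⟨⟨_, b1, b2⟩, hne⟩ := Dir.back hQ h hd
  obtain ⟨c0, c1, c2⟩ := hc
  cases hc : c.2 <;> cases hd : d.2
  · rfl
  · exact absurd (split_ext c0 (le_antisymm (b1 hd) (c2 hc))) hne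
  · exact absurd (split_ext c0 (le_antisymm (c1 hc) (b2 hd))) hne
  · rfl

theorem seg_symm {x y : PSplit Q} (ht : x.thread = y.thread) :
    seg y x = ((seg x y).map linv).reverse := by
  unfold seg
  rcases lt_trichotomy x.idx y.idx with h | h | h
  · rw [if_neg (by omega), if_pos h, ht, List.map_map]; rfl
  · simp [h]
  · rw [if_pos h, if_neg (by omega), ht, List.map_reverse, List.reverse_reverse, List.map_map]; rfl

def Good (Q : BQuiv V A) (c d : Letter A) : Prop := Q.lsrc c = Q.ltgt d ∧ c ≠ linv d

theorem linv_snd {c d : Letter A} (h : c.2 = d.2) : c ≠ linv d := by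
  intro e
  have : c.2 = !d.2 := by rw [e]; rfl
  rw [h] at this
  cases hd : d.2 <;> simp [hd] at this

theorem seg_spec (hQ : Q.IsGentle) (n : ℕ) : ∀ x y : PSplit Q, (seg x y).length = n →
    x.thread = y.thread → x ≠ y → (seg x y).IsChain (Good Q) ∧
    (∀ c ∈ (seg x y).head?, ∃ z, Step x c z) ∧ (∀ c ∈ (seg x y).getLast?, ∃ z, Step z c y) := by
  induction n with
  | zero =>
    intro x y hn ht hne
    obtain ⟨c, x', h1, h2, h3⟩ := seg_cases hQ ht hne
    simp [h3] at hn
  | succ n ih =>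
    intro x y hn ht hne
    obtain ⟨c, x', h1, h2, h3⟩ := seg_cases hQ ht hne
    rw [h3] at hn ⊢
    by_cases hx : x' = y
    · subst hx
      rw [seg_self]
      refine ⟨by simp, ?_, ?_⟩
      · simpa using ⟨_, h1⟩
      · simpa using ⟨_, h1⟩
    · obtain ⟨i1, i2, i3⟩ := ih x' y (by simpa using hn) h2.1 hx
      obtain ⟨d, x'', g1, g2, g3⟩ := seg_cases hQ h2.1 hx
      rw [g3] at i1 i2 i3 ⊢
      refine ⟨List.isChain_cons_cons.2 ⟨⟨?_, ?_⟩, i1⟩, ?_, ?_⟩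
      · rw [h1.lsrc, g1.ltgt]
      · exact linv_snd (Dir.same hQ g1 g2 h2)
      · simpa using ⟨_, h1⟩
      · rw [List.getLast?_cons_cons]; exact i3

theorem doe_center (i : DOE Q) : (DOE.tS i).center = (DOE.sS i).center := i.2.2

theorem doe_ne (i : DOE Q) : DOE.tS i ≠ DOE.sS i := i.2.1

theorem doe_ext_s [Fintype A] (hQ : Q.IsGentle) {i j : DOE Q} (h : DOE.sS i = DOE.sS j) :
    i = j := by
  have h2 : DOE.tS i = DOE.tS j := by
    by_contra hne
    refine no_three hQ (doe_ne i).symm (h ▸ (doe_ne j).symm) hne (doe_center i).symm ?_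
    rw [h]; exact (doe_center j).symm
  exact Subtype.ext (Prod.ext h2 h)

theorem doe_ext_t [Fintype A] (hQ : Q.IsGentle) {i j : DOE Q} (h : DOE.tS i = DOE.tS j) :
    i = j := by
  have := doe_ext_s hQ (i := DOE.inv i) (j := DOE.inv j) h
  have h2 := congrArg DOE.inv this
  exact h2

theorem doe_exists_s [Fintype A] (hQ : Q.IsGentle) (x : PSplit Q) : ∃ i : DOE Q, DOE.sS i = x := by
  obtain ⟨y, h1, h2⟩ := exists_other hQ x
  exact ⟨⟨(y, x), h1, h2⟩, rfl⟩

theorem doe_exists_t [Fintype A] (hQ : Q.IsGentle) (x : PSplit Q) : ∃ i : DOE Q, DOE.tS i = x := by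
  obtain ⟨i, h⟩ := doe_exists_s hQ x
  exact ⟨DOE.inv i, h⟩

def Adjc (i k : DOE Q) : Prop :=
  (DOE.sS i).thread = (DOE.tS k).thread ∧ DOE.sS i ≠ DOE.tS k

theorem adjc_iff [Fintype A] (hQ : Q.IsGentle) (l : List (DOE Q)) :
    l.IsChain Adjc ↔ (IsDWalk Q l ∧ IsDRed Q l) := by
  have : ∀ i k : DOE Q, Adjc i k ↔ (DOE.svx i = DOE.tvx k ∧ k ≠ DOE.inv i) := by
    intro i k
    refine and_congr Iff.rfl (not_congr ⟨fun h => ?_, fun h => ?_⟩)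
    · exact doe_ext_t hQ (i := k) (j := DOE.inv i) h.symm
    · rw [h]; rfl
  unfold IsDWalk IsDRed List.Chain'
  rw [← chain_and]
  exact ⟨fun h => h.imp fun a b => (this a b).1, fun h => h.imp fun a b => (this a b).2⟩

theorem nabla_cons (i k : DOE Q) (r : List (DOE Q)) :
    nablaW (i :: k :: r) = seg (DOE.sS i) (DOE.tS k) ++ nablaW (k :: r) := by
  simp [nablaW, letterOf_eq]

theorem nabla_one (i : DOE Q) : nablaW [i] = [] := by simp [nablaW]

theorem part1 [Fintype A] (hQ : Q.IsGentle) (r : List (DOE Q)) : ∀ i k : DOE Q,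
    (i :: k :: r).IsChain Adjc → nablaW (i :: k :: r) ≠ [] ∧
    (nablaW (i :: k :: r)).IsChain (Good Q) ∧
    ∀ d ∈ (nablaW (i :: k :: r)).head?, ∃ z, Step (DOE.sS i) d z := by
  induction r with
  | nil =>
    intro i k h
    obtain ⟨h1, h2⟩ := (List.isChain_cons_cons.1 h).1
    rw [nabla_cons, nabla_one, List.append_nil]
    obtain ⟨s1, s2, s3⟩ := seg_spec hQ _ _ _ rfl h1 h2
    refine ⟨?_, s1, s2⟩
    obtain ⟨c, x', _, _, e⟩ := seg_cases hQ h1 h2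
    simp [e]
  | cons j r ih =>
    intro i k h
    obtain ⟨⟨h1, h2⟩, h3⟩ := List.isChain_cons_cons.1 h
    obtain ⟨i1, i2, i3⟩ := ih k j h3
    obtain ⟨s1, s2, s3⟩ := seg_spec hQ _ _ _ rfl h1 h2
    obtain ⟨c, x', _, _, e⟩ := seg_cases hQ h1 h2
    rw [nabla_cons]
    refine ⟨by simp [e], List.isChain_append.2 ⟨s1, i2, ?_⟩, ?_⟩
    · intro c hc d hd
      obtain ⟨z, hz⟩ := s3 c hc
      obtain ⟨w, hw⟩ := i3 d hd
      refine ⟨by rw [hz.lsrc, hw.ltgt, doe_center], ?_⟩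
      rintro rfl
      exact doe_ne k (hz.unique hQ hw.inv).2
    · rw [e] at s2 ⊢
      simpa using s2

theorem common_start (hQ : Q.IsGentle) {y y' : PSplit Q} {u u' : List (Letter A)}
    (hu : ∀ d ∈ u.head?, ∃ z w, Step z d w ∧ z ≠ y)
    (hu' : ∀ d ∈ u'.head?, ∃ z w, Step z d w ∧ z ≠ y') (n : ℕ) :
    ∀ x : PSplit Q, (seg x y).length = n → x.thread = y.thread → x.thread = y'.thread →
    seg x y ++ u = seg x y' ++ u' → y = y' ∧ u = u' := by
  induction n with
  | zero =>
    intro x hn ht ht' he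
    have hxy : x = y := by
      by_contra hne
      obtain ⟨c, x', _, _, e⟩ := seg_cases hQ ht hne
      simp [e] at hn
    subst hxy
    by_cases hxy' : x = y'
    · subst hxy'
      exact ⟨rfl, by simpa [seg_self] using he⟩
    · obtain ⟨c, x', h1, _, e⟩ := seg_cases hQ ht' hxy'
      rw [seg_self, e] at he
      obtain ⟨z, w, hz, hne⟩ := hu c (by simp at he; simp [he])
      exact absurd (hz.unique hQ h1).1 hne
  | succ n ih =>
    intro x hn ht ht' he
    have hxy : x ≠ y := by
      rintro rfl
      simp [seg_self] at hn
    obtain ⟨c, x', h1, h2, e⟩ := seg_cases hQ ht hxy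
    by_cases hxy' : x = y'
    · subst hxy'
      rw [seg_self, e] at he
      obtain ⟨z, w, hz, hne⟩ := hu' c (by simp at he; simp [← he])
      exact absurd (hz.unique hQ h1).1 hne
    · obtain ⟨c', x'', h1', h2', e'⟩ := seg_cases hQ ht' hxy'
      rw [e, e'] at he
      rw [List.cons_append, List.cons_append] at he
      obtain ⟨rfl, he2⟩ := List.cons.inj he
      obtain rfl := (h1.unique hQ h1').2
      rw [e] at hn
      exact ih x' (by simpa using hn) h2.1 h2'.1 he2

theorem part2 [Fintype A] (hQ : Q.IsGentle) (r : List (DOE Q)) : ∀ (i k : DOE Q) (r' : List (DOE Q))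
    (i' k' : DOE Q), (i :: k :: r).IsChain Adjc → (i' :: k' :: r').IsChain Adjc →
    nablaW (i :: k :: r) = nablaW (i' :: k' :: r') → i :: k :: r = i' :: k' :: r' := by
  have hd : ∀ (k : DOE Q) r, (k :: r).IsChain Adjc → ∀ d ∈ (nablaW (k :: r)).head?,
      ∃ z w, Step z d w ∧ z ≠ DOE.tS k := by
    intro k r h d hd
    cases r with
    | nil => simp [nabla_one] at hd
    | cons j r =>
      obtain ⟨z, hz⟩ := (part1 hQ r k j h).2.2 d hd
      exact ⟨_, z, hz, (doe_ne k).symm⟩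
  have main : ∀ (i k : DOE Q) (r : List (DOE Q)) (r' : List (DOE Q))
    (i' k' : DOE Q), (i :: k :: r).IsChain Adjc → (i' :: k' :: r').IsChain Adjc →
    nablaW (i :: k :: r) = nablaW (i' :: k' :: r') →
      i = i' ∧ k = k' ∧ nablaW (k :: r) = nablaW (k' :: r') := by
    intro i k r r' i' k' h h' he
    obtain ⟨p1, _, p3⟩ := part1 hQ r i k h
    obtain ⟨_, _, p3'⟩ := part1 hQ r' i' k' h'
    obtain ⟨d, m, hm⟩ := List.exists_cons_of_ne_nil p1
    obtain ⟨z, hz⟩ := p3 d (by simp [hm])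
    obtain ⟨z', hz'⟩ := p3' d (by simp [← he, hm])
    have hi := doe_ext_s hQ (hz.unique hQ hz').1
    subst hi
    obtain ⟨⟨a1, a2⟩, a3⟩ := List.isChain_cons_cons.1 h
    obtain ⟨⟨b1, b2⟩, b3⟩ := List.isChain_cons_cons.1 h'
    rw [nabla_cons, nabla_cons] at he
    obtain ⟨e1, e2⟩ := common_start hQ (hd k r a3) (hd k' r' b3) _ _ rfl a1 b1 he
    exact ⟨rfl, doe_ext_t hQ e1, e2⟩
  induction r with
  | nil =>
    intro i k r' i' k' h h' he
    obtain ⟨rfl, rfl, e⟩ := main _ _ _ _ _ _ h h' he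
    cases r' with
    | nil => rfl
    | cons j r' =>
      rw [nabla_one] at e
      exact absurd e.symm (part1 hQ r' k j (List.isChain_cons_cons.1 h').2).1
  | cons j r ih =>
    intro i k r' i' k' h h' he
    obtain ⟨rfl, rfl, e⟩ := main _ _ _ _ _ _ h h' he
    cases r' with
    | nil =>
      rw [nabla_one] at e
      exact absurd e (part1 hQ r k j (List.isChain_cons_cons.1 h).2).1
    | cons j' r' =>
      rw [ih k j r' k j' (List.isChain_cons_cons.1 h).2 (List.isChain_cons_cons.1 h').2 e]

theorem part3 [Fintype A] (hQ : Q.IsGentle) (m : List (Letter A)) : ∀ c : Letter A,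
    (c :: m).IsChain (Good Q) → ∃ (i k : DOE Q) (r : List (DOE Q)),
      (i :: k :: r).IsChain Adjc ∧ nablaW (i :: k :: r) = c :: m := by
  induction m with
  | nil =>
    intro c _
    obtain ⟨x, y, h⟩ := Step.exists hQ c
    obtain ⟨i, rfl⟩ := doe_exists_s hQ x
    obtain ⟨k, rfl⟩ := doe_exists_t hQ y
    refine ⟨i, k, [], by simpa using ⟨h.thread hQ, h.ne hQ⟩, ?_⟩
    rw [nabla_cons, nabla_one, seg_cons hQ h ⟨rfl, fun _ => le_rfl, fun _ => le_rfl⟩, seg_self]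
    rfl
  | cons d m ih =>
    intro c hc
    obtain ⟨hg, hc'⟩ := List.isChain_cons_cons.1 hc
    obtain ⟨i, k, r, h1, h2⟩ := ih d hc'
    obtain ⟨⟨a1, a2⟩, a3⟩ := List.isChain_cons_cons.1 h1
    obtain ⟨d', x', s1, s2, s3⟩ := seg_cases hQ a1 a2
    have h2' := h2
    rw [nabla_cons, s3] at h2'
    obtain ⟨rfl, h2'⟩ := List.cons.inj h2'
    obtain ⟨x, y, h⟩ := Step.exists hQ c
    obtain ⟨j, rfl⟩ := doe_exists_s hQ x
    by_cases hy : y = DOE.sS i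
    · subst hy
      have hdir := h.same_dir s1 hg.2
      have hD : Dir c (DOE.sS i) (DOE.tS k) := by
        have := (Dir.back hQ s1 s2).1
        unfold Dir at this ⊢
        rwa [hdir]
      refine ⟨j, k, r, List.isChain_cons_cons.2 ⟨⟨(h.thread hQ).trans a1, (Dir.back hQ h hD).2⟩, a3⟩,
        ?_⟩
      rw [nabla_cons, seg_cons hQ h hD, ← h2, nabla_cons]
      rfl
    · have hcen : y.center = (DOE.sS i).center := by rw [← h.lsrc, hg.1, s1.ltgt]
      have hyt : y = DOE.tS i := by
        by_contra hne
        exact no_three hQ hy hne (doe_ne i).symm hcen (hcen.trans (doe_center i).symm)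
      subst hyt
      refine ⟨j, i, k :: r, List.isChain_cons_cons.2 ⟨⟨h.thread hQ, h.ne hQ⟩, h1⟩, ?_⟩
      rw [nabla_cons, h2, seg_cons hQ h ⟨rfl, fun _ => le_rfl, fun _ => le_rfl⟩, seg_self]
      rfl

theorem nabla_snoc (l : List (DOE Q)) (x y : DOE Q) :
    nablaW (l ++ [x, y]) = nablaW (l ++ [x]) ++ seg (DOE.sS x) (DOE.tS y) := by
  induction l with
  | nil => simp [nabla_cons, nabla_one]
  | cons a l ih =>
    cases l with
    | nil => simp [nabla_cons, nabla_one]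
    | cons b l =>
      simp only [List.cons_append] at ih ⊢
      rw [nabla_cons, nabla_cons, ih, List.append_assoc]

theorem part4 (l : List (DOE Q)) (h : IsDWalk Q l) :
    nablaW ((l.map DOE.inv).reverse) = ((nablaW l).map linv).reverse := by
  induction l with
  | nil => rfl
  | cons i l ih =>
    cases l with
    | nil => rfl
    | cons k r =>
      obtain ⟨h1, h2⟩ := List.isChain_cons_cons.1 h
      have ih := ih h2
      rw [nabla_cons, List.map_append, List.reverse_append, ← ih, ← seg_symm (x := DOE.sS i) (y := DOE.tS k) h1]
      simp only [List.map_cons, List.reverse_cons, List.append_assoc, List.cons_append,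
        List.nil_append]
      rw [nabla_snoc]
      rfl

end BQuiv

open BQuiv

/-- Let `(Q, I)` be a gentle bound quiver with marked ribbon graph
`(G, ≤) = △(Q, I)`, whose edges are identified with `Q₀`.  The map sending a reduced
walk `w = i₁i₂⋯i_L i_{L+1}` of `G` to `∇(w) = ⟨i₁|i₂⟩⟨i₂|i₃⟩⋯⟨i_L|i_{L+1}⟩` is a
bijection from the set of reduced walks of `G` of length at least two onto the set of
non-trivial reduced walks of the quiver `Q`, and it satisfies `∇(w⁻¹) = ∇(w)⁻¹`. -/
theorem stmt7 {V A : Type} [Fintype V] [Fintype A] (Q : BQuiv V A) (hQ : Q.IsGentle) :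
    (∀ l : List (DOE Q), IsDWalk Q l → IsDRed Q l → 2 ≤ l.length →
      nablaW l ≠ [] ∧ Q.WalkChain (nablaW l) ∧
      (nablaW l).Chain' (fun c d => c ≠ linv d)) ∧
    (∀ l l' : List (DOE Q), IsDWalk Q l → IsDRed Q l → 2 ≤ l.length →
      IsDWalk Q l' → IsDRed Q l' → 2 ≤ l'.length → nablaW l = nablaW l' → l = l') ∧
    (∀ m : List (Letter A), m ≠ [] → Q.WalkChain m →
      m.Chain' (fun c d => c ≠ linv d) →
      ∃ l : List (DOE Q), IsDWalk Q l ∧ IsDRed Q l ∧ 2 ≤ l.length ∧ nablaW l = m) ∧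
    (∀ l : List (DOE Q), IsDWalk Q l → IsDRed Q l → 2 ≤ l.length →
      nablaW ((l.map DOE.inv).reverse) = ((nablaW l).map linv).reverse) := by
  have cons2 : ∀ l : List (DOE Q), 2 ≤ l.length → ∃ i k r, l = i :: k :: r := by
    intro l hl
    match l, hl with
    | i :: k :: r, _ => exact ⟨i, k, r, rfl⟩
  refine ⟨?_, ?_, ?_, fun l h _ _ => part4 l h⟩
  · intro l h1 h2 hl
    obtain ⟨i, k, r, rfl⟩ := cons2 l hl
    obtain ⟨p1, p2, _⟩ := part1 hQ r i k ((adjc_iff hQ _).2 ⟨h1, h2⟩)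
    exact ⟨p1, p2.imp fun _ _ h => h.1, p2.imp fun _ _ h => h.2⟩
  · intro l l' h1 h2 hl h1' h2' hl' he
    obtain ⟨i, k, r, rfl⟩ := cons2 l hl
    obtain ⟨i', k', r', rfl⟩ := cons2 l' hl'
    exact part2 hQ r i k r' i' k' ((adjc_iff hQ _).2 ⟨h1, h2⟩) ((adjc_iff hQ _).2 ⟨h1', h2'⟩) he
  · intro m hm h1 h2
    obtain ⟨c, m, rfl⟩ := List.exists_cons_of_ne_nil hm
    obtain ⟨i, k, r, h3, h4⟩ := part3 hQ m c (chain_and.2 ⟨h1, h2⟩)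
    obtain ⟨h5, h6⟩ := (adjc_iff hQ _).1 h3
    exact ⟨_, h5, h6, by simp, h4⟩
end

section
/- Let (Q,I) be a gentle bound quiver and let p denote the number of permitted threads of (Q,I). Then 2|Q0| = |Q1| + p. In particular p = 2|Q0| − |Q1| ≥ 1, and |Q0| − 1 ≤ |Q1| ≤ 2|Q0| − 1. -/
set_option autoImplicit false

attribute [local instance] Classical.propDecidable

open BQuiv

namespace BQuiv

variable {V A : Type}

/-- `ab` is a permitted path of length two. -/
def Perm2 (Q : BQuiv V A) (a b : A) : Prop := Q.src a = Q.tgt b ∧ ¬ Q.rel a b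

/-- Arrows at which a permitted thread starts. -/
def Start (Q : BQuiv V A) (a : A) : Prop := ∀ c, Q.src a = Q.tgt c → Q.rel a c

/-- Vertices carrying a trivial permitted thread. -/
def TrivT (Q : BQuiv V A) (v : V) : Prop :=
  Q.deg v = 1 ∨ (Q.deg v = 2 ∧ ∃ α β, Q.src α = v ∧ Q.tgt β = v ∧ ¬ Q.rel α β)

theorem chain_and_iff {R S : A → A → Prop} (l : List A) :
    l.IsChain (fun a b => R a b ∧ S a b) ↔ l.IsChain R ∧ l.IsChain S := by
  induction l with
  | nil => simp
  | cons a l ih =>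
    cases l with
    | nil => simp
    | cons b l => simp only [List.isChain_cons_cons, ih]; tauto

theorem chain_unique {R : A → A → Prop} (hR : ∀ a b b', R a b → R a b' → b = b') :
    ∀ (r₁ r₂ : List A) (s : A), (s :: r₁).IsChain R → (s :: r₂).IsChain R →
      (∀ a b, (s :: r₁).getLast? = some b → ¬ R b a) →
      (∀ a b, (s :: r₂).getLast? = some b → ¬ R b a) → r₁ = r₂ := by
  intro r₁
  induction r₁ with
  | nil =>
    intro r₂ s h1 h2 t1 t2
    cases r₂ with
    | nil => rfl
    | cons b r =>
      simp only [List.isChain_cons_cons] at h2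
      exact absurd h2.1 (t1 b s (by simp))
  | cons c r ih =>
    intro r₂ s h1 h2 t1 t2
    cases r₂ with
    | nil =>
      simp only [List.isChain_cons_cons] at h1
      exact absurd h1.1 (t2 c s (by simp))
    | cons b r' =>
      simp only [List.isChain_cons_cons] at h1 h2
      obtain rfl := hR _ _ _ h1.1 h2.1
      rw [ih r' c h1.2 h2.2 (by simpa using t1) (by simpa using t2)]

theorem chain_bound (Q : BQuiv V A) (hQ : Q.IsGentle) :
    ∃ m, ∀ l : List A, l.IsChain Q.Perm2 → l.length ≠ m := by
  obtain ⟨m, -, hm⟩ := hQ.admissible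
  refine ⟨m, fun l hl h => ?_⟩
  have := (chain_and_iff l).1 hl
  exact hm l h this.1 this.2

theorem exists_start (Q : BQuiv V A) (hQ : Q.IsGentle) : ∃ s, Q.Start s := by
  by_contra hcon
  have hc : ∀ a, ∃ c, Q.Perm2 a c := by
    intro a
    by_contra h
    refine hcon ⟨a, fun c hc => ?_⟩
    by_contra h'
    exact h ⟨c, hc, h'⟩
  obtain ⟨m, hm⟩ := chain_bound Q hQ
  have key : ∀ n a, ∃ l : List A, (a :: l).IsChain Q.Perm2 ∧ l.length = n := by
    intro n
    induction n with
    | zero => intro a; exact ⟨[], by simp⟩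
    | succ n ih =>
      intro a
      obtain ⟨c, hc⟩ := hc a
      obtain ⟨l, hl, hn⟩ := ih c
      exact ⟨c :: l, by simp [List.isChain_cons_cons, hc, hl], by simp [hn]⟩
  obtain ⟨a⟩ := hQ.has_arrow
  obtain ⟨l, hl, hn⟩ := key m a
  exact hm l hl.tail hn

theorem exists_max (Q : BQuiv V A) (hQ : Q.IsGentle) (s : A) :
    ∃ l : List A, l.getLast? = some s ∧ l.IsChain Q.Perm2 ∧
      ∀ a b, l.head? = some b → ¬ Q.Perm2 a b := by
  by_contra hcon
  obtain ⟨m, hm⟩ := chain_bound Q hQ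
  have key : ∀ n, ∃ l : List A, l.getLast? = some s ∧ l.IsChain Q.Perm2 ∧ l.length = n + 1 := by
    intro n
    induction n with
    | zero => exact ⟨[s], by simp⟩
    | succ n ih =>
      obtain ⟨l, h1, h2, h3⟩ := ih
      by_contra h
      refine hcon ⟨l, h1, h2, fun a b hb hab => h ⟨a :: l, ?_, ?_, by simp [h3]⟩⟩
      · cases l with
        | nil => simp at hb
        | cons c l => simpa using h1
      · cases l with
        | nil => simp at hb
        | cons c l =>
          simp only [List.head?_cons, Option.some.injEq] at hb
          subst hb
          exact List.isChain_cons_cons.2 ⟨hab, h2⟩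
  obtain ⟨l, -, h2, h3⟩ := key m
  exact hm l.tail h2.tail (by simp [h3])

theorem max_unique (Q : BQuiv V A) (hQ : Q.IsGentle) (s : A) (l₁ l₂ : List A)
    (e₁ : l₁.getLast? = some s) (e₂ : l₂.getLast? = some s)
    (c₁ : l₁.IsChain Q.Perm2) (c₂ : l₂.IsChain Q.Perm2)
    (t₁ : ∀ a b, l₁.head? = some b → ¬ Q.Perm2 a b)
    (t₂ : ∀ a b, l₂.head? = some b → ¬ Q.Perm2 a b) : l₁ = l₂ := by
  obtain ⟨r₁, rfl⟩ : ∃ r, l₁ = (s :: r).reverse := by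
    obtain ⟨x, hx⟩ := List.getLast?_eq_some_iff.1 e₁
    exact ⟨x.reverse, by simp [hx]⟩
  obtain ⟨r₂, rfl⟩ : ∃ r, l₂ = (s :: r).reverse := by
    obtain ⟨x, hx⟩ := List.getLast?_eq_some_iff.1 e₂
    exact ⟨x.reverse, by simp [hx]⟩
  rw [List.isChain_reverse] at c₁ c₂
  rw [chain_unique (R := fun b a => Q.Perm2 a b)
    (fun b a a' h h' => hQ.unique_nonrel_post b a a' h.1 h'.1 h.2 h'.2) r₁ r₂ s c₁ c₂
    (by simpa only [List.head?_reverse] using t₁) (by simpa only [List.head?_reverse] using t₂)]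

theorem Path.ext' {Q : BQuiv V A} {p q : Path Q} (h : p.base = q.base)
    (h' : p.arrows = q.arrows) : p = q := by
  cases p; cases q; cases h; cases h'; rfl

theorem card_thread [Fintype V] [Fintype A] (Q : BQuiv V A) (hQ : Q.IsGentle) :
    Nat.card (PThread Q) = Nat.card {a // Q.Start a} + Nat.card {v // Q.TrivT v} := by
  choose L hL1 hL2 hL3 using exists_max Q hQ
  have hne : ∀ s, L s ≠ [] := fun s h => by simpa [h] using hL1 s
  let g : {a // Q.Start a} ⊕ {v // Q.TrivT v} → PThread Q := Sum.elim
    (fun s => ⟨⟨Q.src s.1, L s.1, ((chain_and_iff _).1 (hL2 s.1)).1, fun a ha => by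
        rw [hL1, Option.some.injEq] at ha; rw [ha]⟩,
      Or.inl ⟨hne _, ((chain_and_iff _).1 (hL2 s.1)).2, fun a b hb hab => by
        by_contra h; exact hL3 s.1 a b hb ⟨hab, h⟩, fun a c ha hc => by
        change (L s.1).getLast? = some a at ha
        rw [hL1, Option.some.injEq] at ha; subst ha; exact s.2 c hc⟩⟩)
    (fun v => ⟨⟨v.1, [], List.isChain_nil, by simp⟩, Or.inr ⟨rfl, v.2⟩⟩)
  rw [← Nat.card_sum]
  refine (Nat.card_eq_of_bijective g ⟨?_, ?_⟩).symm
  · rintro (s | v) (s' | v') h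
    · have h2 : L s.1 = L s'.1 := congrArg (fun p : PThread Q => p.1.arrows) h
      have := hL1 s.1
      rw [h2, hL1, Option.some.injEq] at this
      rw [Subtype.ext this]
    · exact absurd (congrArg (fun p : PThread Q => p.1.arrows) h) (hne s.1)
    · exact absurd (congrArg (fun p : PThread Q => p.1.arrows) h).symm (hne s'.1)
    · have h2 : v.1 = v'.1 := congrArg (fun p : PThread Q => p.1.base) h
      rw [Subtype.ext h2]
  · rintro ⟨p, ⟨h1, h2, h3, h4⟩ | ⟨h1, h2⟩⟩
    · obtain ⟨s, hs⟩ : ∃ s, p.arrows.getLast? = some s :=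
        ⟨_, List.getLast?_eq_some_getLast h1⟩
      refine ⟨Sum.inl ⟨s, fun c hc => h4 s c hs hc⟩, Subtype.ext (Path.ext' (p.base_eq s hs) ?_)⟩
      exact max_unique Q hQ s _ _ (hL1 s) hs (hL2 s) ((chain_and_iff _).2 ⟨p.chain, h2⟩)
        (hL3 s) (fun a b hb hab => hab.2 (h3 a b hb hab.1))
    · exact ⟨Sum.inr ⟨p.base, h2⟩, Subtype.ext (Path.ext' rfl h1.symm)⟩

theorem deg_pos [Fintype A] (Q : BQuiv V A) (hQ : Q.IsGentle) (v : V) :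
    (∃ a, Q.src a = v) ∨ ∃ a, Q.tgt a = v := by
  obtain ⟨a⟩ := hQ.has_arrow
  rcases Relation.ReflTransGen.cases_head (hQ.connected v (Q.src a)) with h | ⟨w, ⟨b, h⟩, -⟩
  · exact Or.inl ⟨a, h.symm⟩
  · rcases h with h | h
    · exact Or.inl ⟨b, h.1⟩
    · exact Or.inr ⟨b, h.2⟩

theorem vertex_count [Fintype A] (Q : BQuiv V A) (hQ : Q.IsGentle) (v : V) :
    (Finset.univ.filter (fun a => Q.src a = v ∧ Q.Start a)).card +
      (Finset.univ.filter (fun a => Q.tgt a = v)).card + (if Q.TrivT v then 1 else 0) = 2 := by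
  have ho := hQ.out_le v
  have hi := hQ.in_le v
  have hd : Q.deg v = (Finset.univ.filter (fun a => Q.src a = v)).card +
      (Finset.univ.filter (fun a => Q.tgt a = v)).card := by
    simp only [deg, Nat.card_eq_fintype_card, Fintype.card_subtype]
  simp only [Nat.card_eq_fintype_card, Fintype.card_subtype] at ho hi
  have hpos := deg_pos Q hQ v
  have hT : Q.TrivT v ↔ Q.deg v = 1 ∨
    (Q.deg v = 2 ∧ ∃ α β, Q.src α = v ∧ Q.tgt β = v ∧ ¬ Q.rel α β) := Iff.rfl
  rw [hd] at hT
  set O := Finset.univ.filter (fun a => Q.src a = v) with hO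
  set I := Finset.univ.filter (fun a => Q.tgt a = v) with hI
  have mO : ∀ a, a ∈ O ↔ Q.src a = v := by simp [hO]
  have mI : ∀ a, a ∈ I ↔ Q.tgt a = v := by simp [hI]
  have hS : Finset.univ.filter (fun a => Q.src a = v ∧ Q.Start a) =
      O.filter (fun a => ∀ c ∈ I, Q.rel a c) := by
    ext a
    rw [Finset.mem_filter, Finset.mem_filter, mO]
    simp only [mI, Finset.mem_univ, true_and]
    constructor
    · rintro ⟨h, h'⟩; exact ⟨h, fun c hc => h' c (h.trans hc.symm)⟩
    · rintro ⟨h, h'⟩; exact ⟨h, fun c hc => h' c (hc.symm.trans h)⟩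
  rw [hS]
  simp only [← mO, ← mI] at hT hpos
  have hnr : ∀ b ∈ I, ∀ a ∈ O, ∀ a' ∈ O, ¬ Q.rel a b → ¬ Q.rel a' b → a = a' := by
    intro b hb a ha a' ha'
    rw [mO] at ha ha'; rw [mI] at hb
    exact hQ.unique_nonrel_post b a a' (ha.trans hb.symm) (ha'.trans hb.symm)
  have hr := hQ.unique_rel_post
  have hr' := hQ.unique_rel_pre
  obtain h0 | h1 | h2 : I.card = 0 ∨ I.card = 1 ∨ I.card = 2 := by omega
  · have hI0 := Finset.card_eq_zero.1 h0
    rw [hI0] at hT hpos ⊢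
    have : 0 < O.card := by
      rcases hpos with ⟨a, ha⟩ | ⟨a, ha⟩
      · exact Finset.card_pos.2 ⟨a, ha⟩
      · simp at ha
    simp only [Finset.notMem_empty, false_and, and_false, exists_false, or_false,
      Finset.card_empty, add_zero] at hT
    simp only [Finset.notMem_empty, false_imp_iff, implies_true, Finset.filter_true,
      Finset.card_empty, hT]
    split_ifs <;> omega
  · obtain ⟨c, hc⟩ := Finset.card_eq_one.1 h1
    rw [hc] at hT hnr ⊢
    simp only [Finset.mem_singleton, forall_eq, Finset.card_singleton] at hT hnr ⊢
    obtain h0 | h1 | h2 : O.card = 0 ∨ O.card = 1 ∨ O.card = 2 := by omega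
    · rw [Finset.card_eq_zero.1 h0] at hT ⊢
      simp at hT
      simp [hT]
    · obtain ⟨b, hb⟩ := Finset.card_eq_one.1 h1
      rw [hb] at hT ⊢
      simp at hT
      by_cases h : Q.rel b c <;> simp [hT, h, Finset.filter_singleton]
    · obtain ⟨b, b', hne, hb⟩ := Finset.card_eq_two.1 h2
      rw [h2] at hT
      simp at hT
      rw [hb] at hnr ⊢
      have n1 := hnr b (by simp) b' (by simp)
      have n2 := hr c b b'
      rw [if_neg hT, Finset.filter_insert, Finset.filter_singleton]
      by_cases h : Q.rel b c <;> by_cases h' : Q.rel b' c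
      · exact absurd (n2 h h') hne
      · rw [if_pos h, if_neg h']; simp
      · rw [if_neg h, if_pos h']; simp
      · exact absurd (n1 h h') hne
  · obtain ⟨c, c', hne, hc⟩ := Finset.card_eq_two.1 h2
    have hE : O.filter (fun a => ∀ c ∈ I, Q.rel a c) = ∅ := by
      refine Finset.filter_eq_empty_iff.2 fun a _ h => hne (hr' a c c' ?_ ?_)
      · exact h c (by simp [hc])
      · exact h c' (by simp [hc])
    have hTf : ¬ Q.TrivT v := by
      rw [hT]
      rintro (h | ⟨h, a, -, ha, -⟩)
      · omega
      · have := Finset.card_pos.2 ⟨a, ha⟩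
        omega
    rw [hE, h2, if_neg hTf]; simp

theorem count [Fintype V] [Fintype A] (Q : BQuiv V A) (hQ : Q.IsGentle) :
    Nat.card {a // Q.Start a} + Fintype.card A + Nat.card {v // Q.TrivT v} =
      2 * Fintype.card V := by
  have h := Finset.sum_congr (rfl : (Finset.univ : Finset V) = _)
    (fun v _ => vertex_count Q hQ v)
  rw [Finset.sum_add_distrib, Finset.sum_add_distrib] at h
  have e1 := Finset.card_eq_sum_card_fiberwise (f := Q.src)
    (s := Finset.univ.filter Q.Start) (t := Finset.univ) (fun _ _ => by simp)
  have e2 := Finset.card_eq_sum_card_fiberwise (f := Q.tgt)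
    (s := (Finset.univ : Finset A)) (t := Finset.univ) (fun _ _ => by simp)
  have e3 : (Finset.univ.filter Q.TrivT).card = ∑ v, if Q.TrivT v then 1 else 0 := by simp
  simp only [Finset.filter_filter] at e1
  simp only [and_comm (a := Q.Start _)] at e1
  rw [← e1, ← e2, ← e3] at h
  rw [Nat.card_eq_fintype_card, Nat.card_eq_fintype_card, Fintype.card_subtype,
    Fintype.card_subtype]
  simpa [mul_comm] using h

theorem conn_bound [Fintype V] [Fintype A] (Q : BQuiv V A) (hQ : Q.IsGentle) :
    Fintype.card V ≤ Fintype.card A + 1 := by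
  let G : SimpleGraph V := SimpleGraph.fromRel (fun x y => ∃ a, Q.src a = x ∧ Q.tgt a = y)
  have hG : G.Connected := by
    haveI : Nonempty V := hQ.has_arrow.map Q.src
    refine SimpleGraph.Connected.mk fun u v => ?_
    induction hQ.connected u v with
    | refl => exact SimpleGraph.Reachable.refl _
    | @tail x y _ h ih =>
      refine ih.trans ?_
      by_cases hxy : x = y
      · rw [hxy]
      · refine SimpleGraph.Adj.reachable ?_
        obtain ⟨a, h | h⟩ := h
        · exact ⟨hxy, Or.inl ⟨a, h⟩⟩
        · exact ⟨hxy, Or.inr ⟨a, h⟩⟩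
  have h1 := hG.card_vert_le_card_edgeSet_add_one
  have h2 : Nat.card G.edgeSet ≤ Nat.card A := by
    have hs : ∀ e : G.edgeSet, ∃ a, s(Q.src a, Q.tgt a) = e.1 := by
      rintro ⟨e, he⟩
      induction e using Sym2.ind with
      | _ x y =>
        obtain ⟨-, ⟨a, h⟩ | ⟨a, h⟩⟩ := he
        · exact ⟨a, by rw [h.1, h.2]⟩
        · exact ⟨a, by rw [h.1, h.2]; exact Sym2.eq_swap⟩
    choose f hf using hs
    refine Nat.card_le_card_of_injective f fun e e' h => Subtype.ext ?_
    rw [← hf, ← hf, h]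
  rw [Nat.card_eq_fintype_card (α := V)] at h1
  rw [Nat.card_eq_fintype_card (α := A)] at h2
  omega

end BQuiv

/-- Let `(Q, I)` be a gentle bound quiver and `p` the number of its
permitted threads.  Then `2|Q₀| = |Q₁| + p`; in particular `p = 2|Q₀| - |Q₁| ≥ 1` and
`|Q₀| - 1 ≤ |Q₁| ≤ 2|Q₀| - 1`. -/
theorem stmt8 {V A : Type} [Fintype V] [Fintype A] (Q : BQuiv V A) (hQ : Q.IsGentle) :
    2 * Fintype.card V = Fintype.card A + Nat.card (PThread Q) ∧
    1 ≤ Nat.card (PThread Q) ∧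
    Fintype.card V - 1 ≤ Fintype.card A ∧
    Fintype.card A ≤ 2 * Fintype.card V - 1 := by
  have h1 := card_thread Q hQ
  have h2 := count Q hQ
  have h3 := conn_bound Q hQ
  have h4 : 0 < Nat.card {a // Q.Start a} := by
    obtain ⟨s, hs⟩ := exists_start Q hQ
    haveI : Nonempty {a // Q.Start a} := ⟨⟨s, hs⟩⟩
    exact Nat.card_pos
  omega
end
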